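/- arXiv:1503.06243 — 2 statements merged into one kernel-verified Lean document; each statement's English description precedes it below -/
import Mathlib

section
/- For n ≥ 5 and 1 ≤ d ≤ n-3, the d-th total Betti number of R/J_n, where J_n is the Stanley-Reisner ideal of the n-cycle over a field K, equals C(n, d+1) · d(n-d-2)/(n-1). -/
/-- Cyclic adjacency of vertices `i, j` of the `n`-gon (labeled `0, …, n-1` in cyclic order). -/
def cycAdj (n : ℕ) (i j : Fin n) : Prop :=
  (i.val + 1) % n = j.val ∨ (j.val + 1) % n = i.val

/-- `p` is a diagonal of the convex `n`-gon: a pair of distinct non-adjacent vertices. -/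
def IsDiagonal (n : ℕ) (p : Finset (Fin n)) : Prop :=
  ∃ i j : Fin n, i ≠ j ∧ ¬ cycAdj n i j ∧ p = {i, j}

/-- Two chords of the convex `n`-gon cross (intersect in their interiors):
the endpoints interlace along the boundary. -/
def Cross (n : ℕ) (p q : Finset (Fin n)) : Prop :=
  ∃ a b c d : Fin n, a < c ∧ c < b ∧ b < d ∧
    ((p = {a, b} ∧ q = {c, d}) ∨ (p = {c, d} ∧ q = {a, b}))

/-- The Stanley–Reisner ideal `J n` of the `n`-cycle: the ideal of `K[x₀, …, x_{n-1}]`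
generated by the monomials `xᵢxⱼ` over all diagonals `{i, j}` of the `n`-cycle. -/
noncomputable def cycleIdeal (n : ℕ) (K : Type) [Field K] :
    Ideal (MvPolynomial (Fin n) K) :=
  Ideal.span {m | ∃ i j : Fin n, i ≠ j ∧ ¬ cycAdj n i j ∧
    m = MvPolynomial.X i * MvPolynomial.X j}

/-- A minimal free resolution of the `MvPolynomial (Fin n) K`-module `M`:
free modules `Fᵈ = Rᵇ⁽ᵈ⁾` with differentials `φ d : F^{d+1} → F^d`, an augmentation
`ε : F⁰ → M`, exactness, and minimality (all matrix entries of the differentials lie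
in the maximal/irrelevant ideal, i.e. have zero constant coefficient). The rank `b d`
is then the `d`-th total Betti number `β_d(M)`. -/
structure MinimalFreeResolution (n : ℕ) (K : Type) [Field K]
    (M : Type) [AddCommGroup M] [Module (MvPolynomial (Fin n) K) M] where
  b : ℕ → ℕ
  φ : ∀ d : ℕ, (Fin (b (d + 1)) →₀ MvPolynomial (Fin n) K) →ₗ[MvPolynomial (Fin n) K]
        (Fin (b d) →₀ MvPolynomial (Fin n) K)
  ε : (Fin (b 0) →₀ MvPolynomial (Fin n) K) →ₗ[MvPolynomial (Fin n) K] M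
  surj : Function.Surjective ε
  exact_zero : LinearMap.ker ε = LinearMap.range (φ 0)
  exact_succ : ∀ d, LinearMap.ker (φ d) = LinearMap.range (φ (d + 1))
  minimal : ∀ d (i : Fin (b (d + 1))) (j : Fin (b d)),
    MvPolynomial.constantCoeff (φ d (Finsupp.single i 1) j) = 0

/-!
The ideal `J n` is the edge ideal of the complement of the `n`-cycle. For a maximal ideal `m` of a
ring `R`, Betti numbers with respect to `m` are lengths of the modules `Ext^i(-, R/m)`. Removing a
vertex `v` from a graph `G` splits its edge ideal as `I(G) = I(G - v) + x_v N`, where `N` is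
generated by the variables of the neighbours of `v`, and there is a short exact sequence
`0 → I(G - v) ∩ N → I(G - v) × N → I(G) → 0` with first map `r ↦ (x_v r, r)`. This map induces zero
on `Ext^i(-, R/m)`: its first component is a multiple of `x_v`, and its second component lands in
`m N`, where `N` has a linear resolution. So Betti numbers add up along the sequence.

In the complement of a path on `0, …, a`, removing `a` leaves the complement of a shorter path, and
`I(G - a) ∩ N = I(G - a)`. In the complement of a cycle on `0, …, a`, removing `a` leaves the
complement of a path, and `I(G - a) ∩ N` is the edge ideal of the complement of the cycle on
`0, …, a - 1`. Both recursions are solved by binomial coefficients.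
-/

open CategoryTheory CategoryTheory.Abelian

universe u

section Ext

variable {R : Type u} [CommRing R] (κ : Type u) [AddCommGroup κ] [Module R κ]
variable {A B C M N : Type u} [AddCommGroup A] [Module R A] [AddCommGroup B] [Module R B]
  [AddCommGroup C] [Module R C] [AddCommGroup M] [Module R M] [AddCommGroup N] [Module R N]

/-- The map `Ext^i(N, κ) → Ext^i(M, κ)` induced by `f : M → N`. -/
noncomputable def extMap (f : M →ₗ[R] N) (i : ℕ) :
    Ext (ModuleCat.of R N) (ModuleCat.of R κ) i →ₗ[R]
      Ext (ModuleCat.of R M) (ModuleCat.of R κ) i :=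
  (Ext.mk₀ (ModuleCat.ofHom f)).precompOfLinear R (ModuleCat.of R κ) (zero_add i)

variable {i : ℕ}

lemma extMap_apply (f : M →ₗ[R] N) (e : Ext (ModuleCat.of R N) (ModuleCat.of R κ) i) :
    extMap κ f i e = (Ext.mk₀ (ModuleCat.ofHom f)).comp e (zero_add i) := rfl

lemma extMap_comp_apply (g : B →ₗ[R] C) (f : A →ₗ[R] B)
    (e : Ext (ModuleCat.of R C) (ModuleCat.of R κ) i) :
    extMap κ (g ∘ₗ f) i e = extMap κ f i (extMap κ g i e) := by
  simp [extMap_apply, ModuleCat.ofHom_comp]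

lemma extMap_comp (g : B →ₗ[R] C) (f : A →ₗ[R] B) :
    extMap κ (g ∘ₗ f) i = extMap κ f i ∘ₗ extMap κ g i :=
  LinearMap.ext (extMap_comp_apply κ g f)

lemma extMap_id : extMap κ (LinearMap.id : M →ₗ[R] M) i = LinearMap.id := by
  ext1 e
  simp [extMap_apply]

lemma extMap_zero : extMap κ (0 : M →ₗ[R] N) i = 0 := by
  ext1 e
  simp [extMap_apply, Ext.mk₀_zero]

lemma extMap_add (f g : M →ₗ[R] N) : extMap κ (f + g) i = extMap κ f i + extMap κ g i := by
  ext1 e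
  simp [extMap_apply, ModuleCat.ofHom_add, Ext.mk₀_add, Ext.add_comp]

lemma extMap_smul (r : R) (f : M →ₗ[R] N) : extMap κ (r • f) i = r • extMap κ f i := by
  ext1 e
  have : ModuleCat.ofHom (r • f) = r • ModuleCat.ofHom f := rfl
  simp [extMap_apply, this, Ext.mk₀_smul, Ext.smul_comp]

variable {κ}

lemma smul_ext_eq_zero {r : R} (hr : ∀ y : κ, r • y = 0)
    (e : Ext (ModuleCat.of R M) (ModuleCat.of R κ) i) : r • e = 0 := by
  have : r • 𝟙 (ModuleCat.of R κ) = 0 := by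
    ext y
    exact hr y
  rw [Ext.smul_eq_comp_mk₀, this, Ext.mk₀_zero, Ext.comp_zero]

lemma extMap_smul_eq_zero {r : R} (hr : ∀ y : κ, r • y = 0) (f : M →ₗ[R] N) :
    extMap κ (r • f) i = 0 := by
  ext1 e
  rw [extMap_smul, LinearMap.smul_apply, smul_ext_eq_zero hr, LinearMap.zero_apply]

lemma extMap_zero_degree_eq_zero (f : M →ₗ[R] N) (hf : ∀ u : N →ₗ[R] κ, u ∘ₗ f = 0) :
    extMap κ f 0 = 0 := by
  ext1 e
  obtain ⟨u, rfl⟩ := (Ext.mk₀_bijective _ _).2 e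
  have hu : ModuleCat.ofHom f ≫ u = 0 := by
    ext x
    exact LinearMap.congr_fun (hf u.hom) x
  rw [extMap_apply, Ext.mk₀_comp_mk₀, hu, Ext.mk₀_zero, LinearMap.zero_apply]

lemma subsingleton_ext_succ [Module.Projective R M] :
    Subsingleton (Ext (ModuleCat.of R M) (ModuleCat.of R κ) (i + 1)) := by
  have : Projective (ModuleCat.of R M) := ModuleCat.projective_of_categoryTheory_projective _
  exact Ext.subsingleton_of_projective _ _ i

variable (κ) in
/-- The isomorphism `Ext^i(N, κ) ≃ Ext^i(M, κ)` induced by `M ≃ N`. -/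
noncomputable def extEquiv (f : M ≃ₗ[R] N) (i : ℕ) :
    Ext (ModuleCat.of R N) (ModuleCat.of R κ) i ≃ₗ[R]
      Ext (ModuleCat.of R M) (ModuleCat.of R κ) i :=
  .ofLinearMap (extMap κ f i) (extMap κ f.symm i)
    (by rw [← extMap_comp, f.symm_comp, extMap_id]) (by rw [← extMap_comp, f.comp_symm, extMap_id])

end Ext

section ShortExact

variable {R : Type u} [CommRing R] {κ : Type u} [AddCommGroup κ] [Module R κ]
variable {A B C M N : Type u} [AddCommGroup A] [Module R A] [AddCommGroup B] [Module R B]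
  [AddCommGroup C] [Module R C] [AddCommGroup M] [Module R M] [AddCommGroup N] [Module R N]

/-- `0 → A → B → C → 0` is a short exact sequence of modules. -/
structure IsShortExact (f : A →ₗ[R] B) (g : B →ₗ[R] C) : Prop where
  injective : Function.Injective f
  exact : Function.Exact f g
  surjective : Function.Surjective g

lemma isShortExact_subtype_of_ker_eq {P : Submodule R B} {g : B →ₗ[R] C}
    (hP : LinearMap.ker g = P) (hg : Function.Surjective g) : IsShortExact P.subtype g :=
  ⟨P.subtype_injective, LinearMap.exact_iff.2 (by rw [hP, Submodule.range_subtype]), hg⟩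

lemma isShortExact_subtype_mkQ (P : Submodule R M) : IsShortExact P.subtype P.mkQ :=
  isShortExact_subtype_of_ker_eq P.ker_mkQ P.mkQ_surjective

lemma isShortExact_inl_snd : IsShortExact (LinearMap.inl R M N) (LinearMap.snd R M N) :=
  ⟨LinearMap.inl_injective, .inl_snd, LinearMap.snd_surjective⟩

namespace IsShortExact

variable {f : A →ₗ[R] B} {g : B →ₗ[R] C}

lemma exists_comp_eq (h : IsShortExact f g) (u : B →ₗ[R] M) (hu : u ∘ₗ f = 0) :
    ∃ q : C →ₗ[R] M, q ∘ₗ g = u := by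
  have hker : LinearMap.ker g ≤ LinearMap.ker u := by
    rw [h.exact.linearMap_ker_eq]
    exact LinearMap.range_le_ker_iff.2 hu
  refine ⟨(LinearMap.ker g).liftQ u hker ∘ₗ (g.quotKerEquivOfSurjective h.surjective).symm, ?_⟩
  ext b
  have : (g.quotKerEquivOfSurjective h.surjective).symm (g b) = Submodule.Quotient.mk b := by
    rw [LinearEquiv.symm_apply_eq]; rfl
  simp [this]

/-- The short complex in the category of modules underlying a short exact sequence. -/
abbrev complex (h : IsShortExact f g) : ShortComplex (ModuleCat.{u} R) :=
  ShortComplex.mk (ModuleCat.ofHom f) (ModuleCat.ofHom g)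
    (by ext x; exact h.exact.apply_apply_eq_zero x)

lemma shortExact (h : IsShortExact f g) : h.complex.ShortExact :=
  ModuleCat.shortComplex_shortExact h.complex h.exact h.injective h.surjective

/-- The connecting homomorphism `Ext^i(A, κ) → Ext^{i+1}(C, κ)`. -/
noncomputable def connecting (κ : Type u) [AddCommGroup κ] [Module R κ] (h : IsShortExact f g)
    (i : ℕ) : Ext (ModuleCat.of R A) (ModuleCat.of R κ) i →ₗ[R]
      Ext (ModuleCat.of R C) (ModuleCat.of R κ) (i + 1) :=
  h.shortExact.extClass.precompOfLinear R (ModuleCat.of R κ) (add_comm 1 i)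

lemma exact_extMap_extMap (h : IsShortExact f g) (i : ℕ) :
    Function.Exact (extMap κ g i) (extMap κ f i) := by
  intro e
  refine ⟨fun he => Ext.contravariant_sequence_exact₂ h.shortExact _ e he, ?_⟩
  rintro ⟨c, rfl⟩
  rw [← extMap_comp_apply, h.exact.linearMap_comp_eq_zero, extMap_zero, LinearMap.zero_apply]

lemma exact_extMap_connecting (h : IsShortExact f g) (i : ℕ) :
    Function.Exact (extMap κ f i) (h.connecting κ i) := by
  intro e
  refine ⟨fun he => Ext.contravariant_sequence_exact₁ h.shortExact _ e (add_comm 1 i) he, ?_⟩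
  rintro ⟨c, rfl⟩
  exact h.shortExact.extClass_comp_assoc c (h := add_comm 1 i)

lemma exact_connecting_extMap (h : IsShortExact f g) (i : ℕ) :
    Function.Exact (h.connecting κ i) (extMap κ g (i + 1)) := by
  intro e
  refine ⟨fun he => Ext.contravariant_sequence_exact₃ h.shortExact _ e he (add_comm 1 i), ?_⟩
  rintro ⟨c, rfl⟩
  exact h.shortExact.comp_extClass_assoc c (add_comm 1 i)

lemma extMap_zero_degree_injective (h : IsShortExact f g) :
    Function.Injective (extMap κ g 0) := by
  have : Epi (ModuleCat.ofHom g) := (ModuleCat.epi_iff_surjective _).2 h.surjective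
  exact Ext.precomp_mk₀_injective_of_epi (ModuleCat.of R κ) (ModuleCat.ofHom g)

lemma extMap_injective_of_surjective (h : IsShortExact f g)
    (hf : ∀ i, Function.Surjective (extMap κ f i)) :
    ∀ i, Function.Injective (extMap κ g i)
  | 0 => h.extMap_zero_degree_injective
  | i + 1 => by
    refine (injective_iff_map_eq_zero _).2 fun c hc => ?_
    obtain ⟨a, rfl⟩ := (h.exact_connecting_extMap i c).1 hc
    obtain ⟨b, rfl⟩ := hf i a
    exact (h.exact_extMap_connecting i).apply_apply_eq_zero b

lemma extMap_surjective_of_eq_zero (h : IsShortExact f g) {i : ℕ} (hf : extMap κ f i = 0) :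
    Function.Surjective (extMap κ g i) :=
  fun e => (h.exact_extMap_extMap i e).1 (by rw [hf, LinearMap.zero_apply])

lemma connecting_injective_of_eq_zero (h : IsShortExact f g) {i : ℕ} (hf : extMap κ f i = 0) :
    Function.Injective (h.connecting κ i) := by
  refine (injective_iff_map_eq_zero _).2 fun a ha => ?_
  obtain ⟨b, rfl⟩ := (h.exact_extMap_connecting i a).1 ha
  rw [hf, LinearMap.zero_apply]

lemma connecting_naturality {A' B' C' : Type u} [AddCommGroup A'] [Module R A'] [AddCommGroup B']
    [Module R B'] [AddCommGroup C'] [Module R C'] {f' : A' →ₗ[R] B'} {g' : B' →ₗ[R] C'}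
    (h : IsShortExact f g) (h' : IsShortExact f' g') {a : A →ₗ[R] A'} {b : B →ₗ[R] B'}
    {c : C →ₗ[R] C'} (hab : f' ∘ₗ a = b ∘ₗ f) (hbc : g' ∘ₗ b = c ∘ₗ g) {i : ℕ}
    (e : Ext (ModuleCat.of R A') (ModuleCat.of R κ) i) :
    h.connecting κ i (extMap κ a i e) = extMap κ c (i + 1) (h'.connecting κ i e) := by
  let φ : h.complex ⟶ h'.complex :=
    { τ₁ := ModuleCat.ofHom a
      τ₂ := ModuleCat.ofHom b
      τ₃ := ModuleCat.ofHom c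
      comm₁₂ := by rw [← ModuleCat.ofHom_comp, hab, ModuleCat.ofHom_comp]
      comm₂₃ := by rw [← ModuleCat.ofHom_comp, hbc, ModuleCat.ofHom_comp] }
  have naturality := ShortComplex.ShortExact.extClass_naturality h.shortExact h'.shortExact φ
  change h.shortExact.extClass.comp ((Ext.mk₀ φ.τ₁).comp e (zero_add i)) (add_comm 1 i) =
    (Ext.mk₀ φ.τ₃).comp (h'.shortExact.extClass.comp e (add_comm 1 i)) (zero_add (i + 1))
  rw [← Ext.comp_assoc (a₁₂ := 1) _ _ _ (by lia) (by lia) (by lia), naturality,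
    Ext.comp_assoc (a₂₃ := i + 1) _ _ _ (by lia) (by lia) (by lia)]

end IsShortExact

end ShortExact

section BettiNumber

variable {R : Type u} [CommRing R] {m : Ideal R}
variable {A B C M N : Type u} [AddCommGroup A] [Module R A] [AddCommGroup B] [Module R B]
  [AddCommGroup C] [Module R C] [AddCommGroup M] [Module R M] [AddCommGroup N] [Module R N]

variable (m M) in
/-- The length of `Ext^i(M, R/m)`. If `m` is maximal, this is the rank of the `i`-th module in any
free resolution of `M` by modules of finite rank whose differentials have their entries in `m`. -/
noncomputable def bettiNumber (i : ℕ) : ℕ∞ :=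
  Module.length R (Ext (ModuleCat.of R M) (ModuleCat.of R (R ⧸ m)) i)

lemma bettiNumber_congr (f : M ≃ₗ[R] N) (i : ℕ) : bettiNumber m M i = bettiNumber m N i :=
  (extEquiv (R ⧸ m) f i).symm.length_eq

lemma bettiNumber_of_subsingleton [Subsingleton M] (i : ℕ) : bettiNumber m M i = 0 := by
  refine Module.length_eq_zero_iff.2 ⟨fun e e' => ?_⟩
  have h : (extMap (R ⧸ m) LinearMap.id i : _ →ₗ[R] Ext (ModuleCat.of R M) _ i) = 0 := by
    rw [Subsingleton.elim (LinearMap.id : M →ₗ[R] M) 0, extMap_zero]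
  rw [extMap_id] at h
  exact (LinearMap.congr_fun h e).trans (LinearMap.congr_fun h e').symm

lemma bettiNumber_succ_of_projective [Module.Projective R M] (i : ℕ) :
    bettiNumber m M (i + 1) = 0 :=
  Module.length_eq_zero_iff.2 subsingleton_ext_succ

lemma bettiNumber_zero_of_free [hm : m.IsMaximal] [Module.Free R M] [Module.Finite R M] :
    bettiNumber m M 0 = Module.finrank R M := by
  have := Ideal.Quotient.nontrivial_iff.2 hm.ne_top
  have := (Ideal.Quotient.mk m).domain_nontrivial
  have hlen : Module.length R (R ⧸ m) = 1 :=
    have := isSimpleModule_iff_isCoatom.2 hm.out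
    Module.length_eq_one R (R ⧸ m)
  rw [bettiNumber, LinearEquiv.length_eq ((Ext.linearEquiv₀ (R := R)).trans
    ((ModuleCat.homLinearEquiv (S := R)).trans ((Module.Free.chooseBasis R M).constr R).symm)),
    Module.length_pi, hlen, mul_one, ENat.card_eq_coe_fintype_card,
    Module.finrank_eq_card_chooseBasisIndex]

namespace IsShortExact

variable {f : A →ₗ[R] B} {g : B →ₗ[R] C}

lemma bettiNumber_eq_add (h : IsShortExact f g)
    (hf : ∀ i, Function.Surjective (extMap (R ⧸ m) f i)) (i : ℕ) :
    bettiNumber m B i = bettiNumber m C i + bettiNumber m A i :=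
  Module.length_eq_add_of_exact (extMap (R ⧸ m) g i) (extMap (R ⧸ m) f i)
    (h.extMap_injective_of_surjective hf i) (hf i) (h.exact_extMap_extMap i)

lemma bettiNumber_zero_of_extMap_eq_zero (h : IsShortExact f g) (hf : extMap (R ⧸ m) f 0 = 0) :
    bettiNumber m C 0 = bettiNumber m B 0 :=
  (LinearEquiv.ofBijective (extMap (R ⧸ m) g 0)
    ⟨h.extMap_zero_degree_injective, h.extMap_surjective_of_eq_zero hf⟩).length_eq

lemma bettiNumber_succ_of_extMap_eq_zero (h : IsShortExact f g)
    (hf : ∀ i, extMap (R ⧸ m) f i = 0) (i : ℕ) :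
    bettiNumber m C (i + 1) = bettiNumber m A i + bettiNumber m B (i + 1) :=
  Module.length_eq_add_of_exact (h.connecting (R ⧸ m) i) (extMap (R ⧸ m) g (i + 1))
    (h.connecting_injective_of_eq_zero (hf i)) (h.extMap_surjective_of_eq_zero (hf (i + 1)))
    (h.exact_connecting_extMap i)

end IsShortExact

lemma bettiNumber_prod (i : ℕ) :
    bettiNumber m (M × N) i = bettiNumber m M i + bettiNumber m N i := by
  rw [isShortExact_inl_snd.bettiNumber_eq_add (fun i e => ⟨extMap _ (LinearMap.fst R M N) i e, ?_⟩),
    add_comm]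
  rw [← extMap_comp_apply, LinearMap.fst_comp_inl, extMap_id, LinearMap.id_apply]

end BettiNumber

section LinearModules

variable {R : Type u} [CommRing R] {m : Ideal R}
variable {A B C M N : Type u} [AddCommGroup A] [Module R A] [AddCommGroup B] [Module R B]
  [AddCommGroup C] [Module R C] [AddCommGroup M] [Module R M] [AddCommGroup N] [Module R N]

variable (m M) in
/-- The module `M` is linear with respect to `m` if every class in `Ext^i(M, R/m)` is induced from
`M/mM`. For a graded module generated in a single degree over a polynomial ring this says that its
minimal free resolution is linear. -/
def IsExtLinear : Prop :=
  ∀ i, Function.Surjective (extMap (R ⧸ m) (m • ⊤ : Submodule R M).mkQ i)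

lemma smul_quotient_eq_zero {r : R} (hr : r ∈ m) (y : R ⧸ m) : r • y = 0 := by
  rw [Algebra.smul_def, Ideal.Quotient.algebraMap_eq, Ideal.Quotient.eq_zero_iff_mem.2 hr, zero_mul]

lemma smul_top_le_comap (f : A →ₗ[R] B) :
    (m • ⊤ : Submodule R A) ≤ (m • ⊤ : Submodule R B).comap f := by
  rw [← Submodule.map_le_iff_le_comap, Submodule.map_smul'']
  exact Submodule.smul_mono le_rfl le_top

lemma smul_top_le_ker {f : M →ₗ[R] N} (hN : ∀ r ∈ m, ∀ y : N, r • y = 0) :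
    (m • ⊤ : Submodule R M) ≤ LinearMap.ker f :=
  Submodule.smul_le.2 fun r hr x _ => by rw [LinearMap.mem_ker, map_smul, hN r hr]

lemma smul_quotient_smul_top_eq_zero {r : R} (hr : r ∈ m) (y : M ⧸ (m • ⊤ : Submodule R M)) :
    r • y = 0 :=
  Module.isTorsionBySet_quotient_ideal_smul M m (x := y) (a := ⟨r, hr⟩)

lemma exists_extMap_mkQ_eq {q : M →ₗ[R] N} (hN : ∀ r ∈ m, ∀ y : N, r • y = 0) {i : ℕ}
    (e : Ext (ModuleCat.of R N) (ModuleCat.of R (R ⧸ m)) i) :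
    ∃ e', extMap (R ⧸ m) (m • ⊤ : Submodule R M).mkQ i e' = extMap (R ⧸ m) q i e :=
  ⟨extMap _ ((m • ⊤ : Submodule R M).liftQ q (smul_top_le_ker hN)) i e, by
    rw [← extMap_comp_apply, Submodule.liftQ_mkQ]⟩

lemma exists_retraction_quotient [m.IsMaximal] {f : A →ₗ[R] B}
    (hf : (m • ⊤ : Submodule R B).comap f ≤ m • ⊤) :
    ∃ ρ : B →ₗ[R] (A ⧸ (m • ⊤ : Submodule R A)), ρ ∘ₗ f = (m • ⊤ : Submodule R A).mkQ := by
  let _ := Ideal.Quotient.field m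
  have tors : Module.IsTorsionBySet R (B ⧸ (m • ⊤ : Submodule R B)) m :=
    Module.isTorsionBySet_quotient_ideal_smul B m
  let _ := tors.module
  have : IsSemisimpleModule R (B ⧸ (m • ⊤ : Submodule R B)) :=
    tors.isSemisimpleModule_iff.1 inferInstance
  obtain ⟨ρ, hρ⟩ := IsSemisimpleModule.extension_property
    (Submodule.mapQ _ _ f (smul_top_le_comap f)) (by
      rw [← LinearMap.ker_eq_bot, Submodule.ker_mapQ, ← le_bot_iff, Submodule.map_le_iff_le_comap]
      simpa using hf) LinearMap.id
  refine ⟨ρ ∘ₗ (m • ⊤ : Submodule R B).mkQ, LinearMap.ext fun a => ?_⟩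
  exact LinearMap.congr_fun hρ (Submodule.Quotient.mk a)

namespace IsExtLinear

lemma extMap_eq_zero (hB : IsExtLinear m B) {f : A →ₗ[R] B}
    (hf : ∀ a, f a ∈ (m • ⊤ : Submodule R B)) (i : ℕ) : extMap (R ⧸ m) f i = 0 := by
  ext1 e
  obtain ⟨e, rfl⟩ := hB i e
  have : (m • ⊤ : Submodule R B).mkQ ∘ₗ f = 0 := by
    ext a
    simpa using hf a
  rw [← extMap_comp_apply, this, extMap_zero, LinearMap.zero_apply, LinearMap.zero_apply]

lemma of_projective [Module.Projective R M] : IsExtLinear m M := by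
  intro i e
  refine ((isShortExact_subtype_mkQ _).exact_extMap_extMap i e).1 ?_
  cases i with
  | zero =>
    rw [extMap_zero_degree_eq_zero, LinearMap.zero_apply]
    intro u
    ext ⟨a, ha⟩
    exact smul_top_le_ker (f := u) (fun r hr => smul_quotient_eq_zero hr) ha
  | succ i =>
    have : Subsingleton (Ext (ModuleCat.of R M) (ModuleCat.of R (R ⧸ m)) (i + 1)) :=
      subsingleton_ext_succ
    rw [Subsingleton.elim e 0, map_zero]

lemma prod (hM : IsExtLinear m M) (hN : IsExtLinear m N) : IsExtLinear m (M × N) := by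
  intro i e
  obtain ⟨a, ha⟩ := hM i (extMap _ (LinearMap.inl R M N) i e)
  obtain ⟨b, hb⟩ := hN i (extMap _ (LinearMap.inr R M N) i e)
  obtain ⟨a', ha'⟩ := exists_extMap_mkQ_eq
    (q := (m • ⊤ : Submodule R M).mkQ ∘ₗ LinearMap.fst R M N)
    (fun r hr => smul_quotient_smul_top_eq_zero hr) a
  obtain ⟨b', hb'⟩ := exists_extMap_mkQ_eq
    (q := (m • ⊤ : Submodule R N).mkQ ∘ₗ LinearMap.snd R M N)
    (fun r hr => smul_quotient_smul_top_eq_zero hr) b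
  have hid : LinearMap.inl R M N ∘ₗ LinearMap.fst R M N +
      LinearMap.inr R M N ∘ₗ LinearMap.snd R M N = LinearMap.id := by
    ext <;> simp
  refine ⟨a' + b', ?_⟩
  rw [map_add, ha', hb', extMap_comp_apply, ha, extMap_comp_apply, hb, ← extMap_comp_apply,
    ← extMap_comp_apply, ← LinearMap.add_apply, ← extMap_add, hid, extMap_id, LinearMap.id_apply]

variable [m.IsMaximal]

lemma extMap_surjective (hA : IsExtLinear m A) {f : A →ₗ[R] B}
    (hf : (m • ⊤ : Submodule R B).comap f ≤ m • ⊤) (i : ℕ) :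
    Function.Surjective (extMap (R ⧸ m) f i) := by
  intro e
  obtain ⟨e, rfl⟩ := hA i e
  obtain ⟨ρ, hρ⟩ := exists_retraction_quotient hf
  exact ⟨extMap _ ρ i e, by rw [← extMap_comp_apply, hρ]⟩

lemma of_isShortExact (hA : IsExtLinear m A) (hB : IsExtLinear m B) {f : A →ₗ[R] B}
    {g : B →ₗ[R] C} (h : IsShortExact f g) (hf : ∀ a, f a ∈ (m • ⊤ : Submodule R B))
    (hf' : (m • m • ⊤ : Submodule R B).comap f ≤ m • ⊤) : IsExtLinear m C := by
  let f' : A →ₗ[R] (m • ⊤ : Submodule R B) := f.codRestrict _ hf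
  have hcomap : (m • ⊤ : Submodule R (m • ⊤ : Submodule R B)).comap f' ≤ m • ⊤ :=
    fun a ha => hf' ((Submodule.mem_smul_top_iff _ _ _).1 ha)
  obtain ⟨q, hq⟩ := h.exists_comp_eq (m • ⊤ : Submodule R B).mkQ (by ext a; simpa using hf a)
  suffices ∀ i, Function.Surjective (extMap (R ⧸ m) q i) by
    intro i c
    obtain ⟨y, rfl⟩ := this i c
    exact exists_extMap_mkQ_eq (fun r hr => smul_quotient_smul_top_eq_zero hr) y
  intro i c
  obtain ⟨y, hy⟩ := hB i (extMap _ g i c)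
  have hzero : extMap (R ⧸ m) g i (c - extMap _ q i y) = 0 := by
    rw [map_sub, ← extMap_comp_apply, hq, hy, sub_self]
  cases i with
  | zero =>
    have := h.extMap_zero_degree_injective (hzero.trans (map_zero _).symm)
    exact ⟨y, (sub_eq_zero.1 this).symm⟩
  | succ i =>
    obtain ⟨a, ha⟩ := (h.exact_connecting_extMap i _).1 hzero
    obtain ⟨b, rfl⟩ := hA.extMap_surjective hcomap i a
    rw [h.connecting_naturality (isShortExact_subtype_mkQ (m • ⊤ : Submodule R B))
      (b := LinearMap.id) (c := q) (by ext; rfl) (by rw [hq]; rfl)] at ha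
    refine ⟨y + (isShortExact_subtype_mkQ _).connecting _ i b, ?_⟩
    rw [map_add, ha, add_sub_cancel]

end IsExtLinear

end LinearModules

section Splitting

variable {R : Type u} [CommRing R] {m : Ideal R} {x : R} {I N : Ideal R}

variable (x I N) in
/-- The map `I ∩ N → I × N`, `r ↦ (x r, r)`. If `x` is a nonzerodivisor modulo `I`, it is the kernel
of the map `(a, b) ↦ a - x b` onto `I + x N`. -/
def splittingMap : ↥(I ⊓ N) →ₗ[R] I × N :=
  (x • Submodule.inclusion inf_le_left).prod (Submodule.inclusion inf_le_right)

lemma exists_isShortExact_splittingMap (hx : ∀ r, x * r ∈ I → r ∈ I) :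
    ∃ g : I × N →ₗ[R] ↥(I ⊔ Ideal.span {x} * N), IsShortExact (splittingMap x I N) g := by
  let g₀ : I × N →ₗ[R] R := I.subtype.coprod (-(x • N.subtype))
  have hg₀ (p : I × N) : g₀ p = p.1 - x * p.2 := by simp [g₀, sub_eq_add_neg]
  have hrange : LinearMap.range g₀ = I ⊔ Ideal.span {x} * N := by
    refine le_antisymm ?_ (sup_le (fun r hr => ⟨(⟨r, hr⟩, 0), by simp [hg₀]⟩) ?_)
    · rintro _ ⟨p, rfl⟩
      rw [hg₀]
      exact sub_mem (Ideal.mem_sup_left p.1.2) (Ideal.mem_sup_right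
        (Ideal.mul_mem_mul (Ideal.mem_span_singleton_self x) p.2.2))
    · intro r hr
      obtain ⟨s, hs, rfl⟩ := Ideal.mem_span_singleton_mul.1 hr
      exact ⟨(0, -⟨s, hs⟩), by simp [hg₀]⟩
  rw [← hrange]
  refine ⟨g₀.rangeRestrict, fun r s hrs => ?_, fun p => ?_, g₀.surjective_rangeRestrict⟩
  · exact Submodule.inclusion_injective inf_le_right (congrArg Prod.snd hrs)
  · rw [← LinearMap.mem_ker, LinearMap.ker_rangeRestrict, LinearMap.mem_ker, hg₀, sub_eq_zero]
    constructor
    · intro hp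
      exact ⟨⟨p.2, hx _ (hp ▸ p.1.2), p.2.2⟩, Prod.ext (Subtype.ext hp.symm) rfl⟩
    · rintro ⟨r, rfl⟩
      rfl

section

variable (hxm : x ∈ m) (hle : I ⊓ N ≤ m * N)
include hxm hle

lemma extMap_splittingMap_eq_zero (hN : IsExtLinear m N) (i : ℕ) :
    extMap (R ⧸ m) (splittingMap x I N) i = 0 := by
  have hincl : extMap (R ⧸ m) (Submodule.inclusion (inf_le_right : I ⊓ N ≤ N)) i = 0 :=
    hN.extMap_eq_zero (fun r => (Submodule.mem_smul_top_iff _ _ _).2 (hle r.2)) i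
  have hsum : splittingMap x I N =
      x • (LinearMap.inl R I N ∘ₗ Submodule.inclusion inf_le_left) +
        LinearMap.inr R I N ∘ₗ Submodule.inclusion inf_le_right := by
    ext <;> simp [splittingMap]
  rw [hsum, extMap_add, extMap_smul_eq_zero fun y => smul_quotient_eq_zero hxm y, extMap_comp,
    hincl, LinearMap.zero_comp, add_zero]

lemma bettiNumber_sup_span_mul_zero (hx : ∀ r, x * r ∈ I → r ∈ I) (hN : IsExtLinear m N) :
    bettiNumber m ↥(I ⊔ Ideal.span {x} * N) 0 = bettiNumber m I 0 + bettiNumber m N 0 := by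
  obtain ⟨g, h⟩ := exists_isShortExact_splittingMap (N := N) hx
  rw [h.bettiNumber_zero_of_extMap_eq_zero (extMap_splittingMap_eq_zero hxm hle hN 0),
    bettiNumber_prod]

lemma bettiNumber_sup_span_mul_succ (hx : ∀ r, x * r ∈ I → r ∈ I) (hN : IsExtLinear m N) (i : ℕ) :
    bettiNumber m ↥(I ⊔ Ideal.span {x} * N) (i + 1) =
      bettiNumber m ↥(I ⊓ N) i + (bettiNumber m I (i + 1) + bettiNumber m N (i + 1)) := by
  obtain ⟨g, h⟩ := exists_isShortExact_splittingMap (N := N) hx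
  rw [h.bettiNumber_succ_of_extMap_eq_zero (extMap_splittingMap_eq_zero hxm hle hN),
    bettiNumber_prod]

lemma IsExtLinear.sup_span_mul [m.IsMaximal] (hx : ∀ r, x * r ∈ I → r ∈ I)
    (hinf : I ⊓ N ⊓ m * (m * N) ≤ m * (I ⊓ N)) (hIN : IsExtLinear m ↥(I ⊓ N))
    (hI : IsExtLinear m I) (hN : IsExtLinear m N) :
    IsExtLinear m ↥(I ⊔ Ideal.span {x} * N) := by
  obtain ⟨g, h⟩ := exists_isShortExact_splittingMap (N := N) hx
  refine hIN.of_isShortExact (hI.prod hN) h (fun r => ?_) fun r hr => ?_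
  · have hfst : x • Submodule.inclusion inf_le_left r ∈ (m • ⊤ : Submodule R I) :=
      Submodule.smul_mem_smul hxm trivial
    have hsnd : Submodule.inclusion inf_le_right r ∈ (m • ⊤ : Submodule R N) :=
      (Submodule.mem_smul_top_iff _ _ _).2 (hle r.2)
    rw [← Prod.fst_add_snd (splittingMap x I N r)]
    exact add_mem (smul_top_le_comap (LinearMap.inl R I N) hfst)
      (smul_top_le_comap (LinearMap.inr R I N) hsnd)
  · have hmap : Submodule.map (N.subtype ∘ₗ LinearMap.snd R I N)
        (m • m • ⊤ : Submodule R (I × N)) ≤ m * (m * N) := by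
      rw [Submodule.map_smul'', Submodule.map_smul'', Submodule.map_top]
      refine Submodule.smul_mono le_rfl (Submodule.smul_mono le_rfl ?_)
      rintro _ ⟨p, rfl⟩
      exact p.2.2
    exact (Submodule.mem_smul_top_iff _ _ _).2 (hinf ⟨r.2, hmap ⟨_, hr, rfl⟩⟩)

end

end Splitting

section MinimalResolutions

variable {R : Type u} [CommRing R] {m : Ideal R}

namespace IsShortExact

variable {A B C : Type u} [AddCommGroup A] [Module R A] [AddCommGroup B] [Module R B]
  [Module.Projective R B] [AddCommGroup C] [Module R C] {f : A →ₗ[R] B} {g : B →ₗ[R] C}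

lemma bettiNumber_zero_of_forall_mem (h : IsShortExact f g)
    (hf : ∀ a, f a ∈ (m • ⊤ : Submodule R B)) : bettiNumber m C 0 = bettiNumber m B 0 :=
  h.bettiNumber_zero_of_extMap_eq_zero (IsExtLinear.of_projective.extMap_eq_zero hf 0)

lemma bettiNumber_succ_of_forall_mem (h : IsShortExact f g)
    (hf : ∀ a, f a ∈ (m • ⊤ : Submodule R B)) (i : ℕ) :
    bettiNumber m C (i + 1) = bettiNumber m A i := by
  rw [h.bettiNumber_succ_of_extMap_eq_zero (IsExtLinear.of_projective.extMap_eq_zero hf),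
    bettiNumber_succ_of_projective, add_zero]

end IsShortExact

lemma bettiNumber_quotient_succ {I : Ideal R} (hI : I ≤ m) (i : ℕ) :
    bettiNumber m (R ⧸ I) (i + 1) = bettiNumber m I i :=
  (isShortExact_subtype_mkQ I).bettiNumber_succ_of_forall_mem
    (fun a => by simpa using hI a.2) i

lemma mem_smul_top_of_forall_apply_mem {ι : Type*} {v : ι →₀ R} (hv : ∀ i, v i ∈ m) :
    v ∈ (m • ⊤ : Submodule R (ι →₀ R)) := by
  rw [← v.sum_single]
  refine Submodule.sum_mem _ fun i _ => ?_
  rw [← mul_one (v i), ← smul_eq_mul, ← Finsupp.smul_single]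
  exact Submodule.smul_mem_smul (hv i) trivial

lemma range_le_smul_top {ι ι' : Type*} {φ : (ι →₀ R) →ₗ[R] (ι' →₀ R)}
    (hφ : ∀ i j, φ (Finsupp.single i 1) j ∈ m) : LinearMap.range φ ≤ m • ⊤ := by
  rw [LinearMap.range_eq_map, ← Finsupp.basisSingleOne.span_eq, Submodule.map_span_le]
  rintro _ ⟨i, rfl⟩
  exact mem_smul_top_of_forall_apply_mem (by simpa using hφ i)

variable {F : ℕ → Type u} [∀ d, AddCommGroup (F d)] [∀ d, Module R (F d)]
  [∀ d, Module.Free R (F d)] [∀ d, Module.Finite R (F d)] {φ : ∀ d, F (d + 1) →ₗ[R] F d}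
  {M : Type u} [AddCommGroup M] [Module R M] {ε : F 0 →ₗ[R] M}

section

variable [m.IsMaximal] (hφ : ∀ d, LinearMap.range (φ d) ≤ m • ⊤)
  (hexact : ∀ d, LinearMap.ker (φ d) = LinearMap.range (φ (d + 1)))
include hφ hexact

lemma bettiNumber_range_eq_finrank (d i : ℕ) :
    bettiNumber m (LinearMap.range (φ d)) i = Module.finrank R (F (d + i + 1)) := by
  have h (d : ℕ) : IsShortExact (LinearMap.range (φ (d + 1))).subtype (φ d).rangeRestrict :=
    isShortExact_subtype_of_ker_eq ((φ d).ker_rangeRestrict.trans (hexact d))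
      (φ d).surjective_rangeRestrict
  induction i generalizing d with
  | zero =>
    rw [(h d).bettiNumber_zero_of_forall_mem fun z => hφ _ z.2, bettiNumber_zero_of_free, add_zero]
  | succ i ih =>
    rw [(h d).bettiNumber_succ_of_forall_mem fun z => hφ _ z.2, ih, add_right_comm d 1 i,
      add_assoc d i 1]

lemma bettiNumber_eq_finrank (hzero : LinearMap.ker ε = LinearMap.range (φ 0))
    (hε : Function.Surjective ε) (d : ℕ) : bettiNumber m M d = Module.finrank R (F d) := by
  have h := isShortExact_subtype_of_ker_eq hzero hε
  cases d with
  | zero => rw [h.bettiNumber_zero_of_forall_mem fun z => hφ 0 z.2, bettiNumber_zero_of_free]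
  | succ d =>
    rw [h.bettiNumber_succ_of_forall_mem fun z => hφ 0 z.2,
      bettiNumber_range_eq_finrank hφ hexact, zero_add]

end

end MinimalResolutions

section VariableIdeals

open MvPolynomial

variable {σ R : Type*} [CommRing R] {s : Set σ} {v : σ} {p : MvPolynomial σ R}

lemma mem_idealOfVars_iff_constantCoeff_eq_zero :
    p ∈ idealOfVars σ R ↔ constantCoeff p = 0 := by
  rw [← pow_one (idealOfVars σ R), mem_pow_idealOfVars_iff']
  simp [constantCoeff_eq, Finsupp.degree_eq_zero_iff]

lemma X_mem_idealOfVars (v : σ) : X v ∈ idealOfVars σ R :=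
  Ideal.subset_span ⟨v, rfl⟩

lemma span_X_image_le_idealOfVars : Ideal.span (X '' s) ≤ idealOfVars σ R :=
  Ideal.span_le.2 fun _ ⟨v, _, hv⟩ => hv ▸ X_mem_idealOfVars v

lemma single_add_mem_support_X_mul {e : σ →₀ ℕ} (he : e ∈ p.support) :
    Finsupp.single v 1 + e ∈ (X v * p).support := by
  rwa [mem_support_iff, coeff_X_mul, ← mem_support_iff]

lemma mem_span_X_image_of_X_mul_mem (hv : v ∉ s) (hp : X v * p ∈ Ideal.span (X '' s)) :
    p ∈ Ideal.span (X '' s) := by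
  rw [mem_ideal_span_X_image] at hp ⊢
  intro e he
  obtain ⟨i, hi, hei⟩ := hp _ (single_add_mem_support_X_mul he)
  have hvi : v ≠ i := fun h => hv (h ▸ hi)
  exact ⟨i, hi, by simpa [Finsupp.single_apply, hvi] using hei⟩

lemma span_X_image_inf_sq_le :
    Ideal.span (X '' s) ⊓ idealOfVars σ R ^ 2 ≤ idealOfVars σ R * Ideal.span (X '' s) := by
  classical
  rintro p ⟨hps, hpm⟩
  rw [p.as_sum]
  refine Ideal.sum_mem _ fun e he => ?_
  obtain ⟨i, hi, hei⟩ := mem_ideal_span_X_image.1 hps e he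
  obtain ⟨e', rfl⟩ := exists_add_of_le (Finsupp.single_le_iff.2 (Nat.one_le_iff_ne_zero.2 hei))
  have he' : e' ≠ 0 := by
    rintro rfl
    have := (mem_pow_idealOfVars_iff 2 p).1 hpm _ he
    simp at this
  rw [add_comm, ← mul_one (coeff _ p), ← monomial_mul]
  refine Ideal.mul_mem_mul ?_ (Ideal.subset_span ⟨i, hi, rfl⟩)
  rw [mem_idealOfVars_iff_constantCoeff_eq_zero, constantCoeff_monomial, if_neg he']

lemma span_X_image_insert :
    (Ideal.span (X '' insert v s) : Ideal (MvPolynomial σ R)) =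
      Ideal.span (X '' s) ⊔ Ideal.span {X v} * ⊤ := by
  rw [Set.image_insert_eq, Ideal.span_insert, sup_comm, Ideal.mul_top]

instance projective_top : Module.Projective R (⊤ : Ideal R) :=
  Module.Projective.of_equiv Submodule.topEquiv.symm

end VariableIdeals

section BettiNumberVariableIdeals

open MvPolynomial

variable {σ K : Type u} [Field K]

instance isMaximal_idealOfVars : (idealOfVars σ K).IsMaximal := by
  have : idealOfVars σ K = RingHom.ker (constantCoeff : MvPolynomial σ K →+* K) := by
    ext p
    rw [mem_idealOfVars_iff_constantCoeff_eq_zero, RingHom.mem_ker]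
  rw [this]
  exact RingHom.ker_isMaximal_of_surjective _ fun a => ⟨C a, constantCoeff_C _ a⟩

lemma isExtLinear_span_X_image (s : Finset σ) :
    IsExtLinear (idealOfVars σ K) (Ideal.span (X '' (s : Set σ)) : Ideal (MvPolynomial σ K)) := by
  classical
  induction s using Finset.induction_on with
  | empty =>
    rw [Finset.coe_empty, Set.image_empty, Ideal.span_empty]
    exact .of_projective
  | insert v s hv ih =>
    rw [Finset.coe_insert, span_X_image_insert]
    refine .sup_span_mul (X_mem_idealOfVars v) ?_
      (fun _ => mem_span_X_image_of_X_mul_mem hv) ?_ ?_ ih .of_projective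
    · rw [inf_top_eq, Ideal.mul_top]
      exact span_X_image_le_idealOfVars
    · rw [inf_top_eq, Ideal.mul_top, ← sq]
      exact span_X_image_inf_sq_le
    · rwa [inf_top_eq]

lemma bettiNumber_span_X_image (s : Finset σ) (i : ℕ) :
    bettiNumber (idealOfVars σ K) (Ideal.span (X '' (s : Set σ)) : Ideal (MvPolynomial σ K)) i =
      s.card.choose (i + 1) := by
  classical
  induction s using Finset.induction_on generalizing i with
  | empty =>
    rw [Finset.coe_empty, Set.image_empty, Ideal.span_empty, bettiNumber_of_subsingleton]
    simp
  | insert v s hv ih =>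
    have hle : Ideal.span (X '' (s : Set σ)) ⊓ ⊤ ≤ idealOfVars σ K * ⊤ := by
      rw [inf_top_eq, Ideal.mul_top]
      exact span_X_image_le_idealOfVars
    have hcolon (p : MvPolynomial σ K) := mem_span_X_image_of_X_mul_mem (p := p) hv
    rw [Finset.coe_insert, span_X_image_insert, Finset.card_insert_of_notMem hv]
    cases i with
    | zero =>
      rw [bettiNumber_sup_span_mul_zero (X_mem_idealOfVars v) hle hcolon .of_projective, ih,
        bettiNumber_congr Submodule.topEquiv, bettiNumber_zero_of_free, Module.finrank_self]
      simp
    | succ i =>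
      rw [bettiNumber_sup_span_mul_succ (X_mem_idealOfVars v) hle hcolon .of_projective, inf_top_eq,
        ih, ih, bettiNumber_succ_of_projective, add_zero, Nat.choose_succ_succ s.card, Nat.cast_add]

end BettiNumberVariableIdeals

section EdgeIdeals

open MvPolynomial

variable {σ : Type*} (R : Type*) [CommRing R] (G : SimpleGraph σ)

/-- The edge ideal of a graph `G`: the ideal generated by the monomials `x_i x_j` over the edges
`{i, j}` of `G`. -/
noncomputable def edgeIdeal : Ideal (MvPolynomial σ R) :=
  Ideal.span {p | ∃ i j, G.Adj i j ∧ p = X i * X j}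

variable {R} {G} {v : σ} {p : MvPolynomial σ R}

lemma X_mul_X_mem_edgeIdeal {i j : σ} (h : G.Adj i j) : X i * X j ∈ edgeIdeal R G :=
  Ideal.subset_span ⟨i, j, h, rfl⟩

lemma edgeIdeal_le_iff {I : Ideal (MvPolynomial σ R)} :
    edgeIdeal R G ≤ I ↔ ∀ i j, G.Adj i j → X i * X j ∈ I := by
  refine Ideal.span_le.trans ⟨fun h i j hij => h ⟨i, j, hij, rfl⟩, ?_⟩
  rintro h _ ⟨i, j, hij, rfl⟩
  exact h i j hij

lemma edgeIdeal_mono {H : SimpleGraph σ} (h : H ≤ G) : edgeIdeal R H ≤ edgeIdeal R G :=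
  edgeIdeal_le_iff.2 fun _ _ hij => X_mul_X_mem_edgeIdeal (h hij)

lemma edgeIdeal_bot : edgeIdeal R (⊥ : SimpleGraph σ) = ⊥ :=
  le_bot_iff.1 (edgeIdeal_le_iff.2 fun _ _ h => h.elim)

lemma edgeIdeal_le_sq : edgeIdeal R G ≤ idealOfVars σ R ^ 2 := by
  rw [sq]
  exact edgeIdeal_le_iff.2 fun i j _ =>
    Ideal.mul_mem_mul (X_mem_idealOfVars i) (X_mem_idealOfVars j)

lemma mem_edgeIdeal_iff :
    p ∈ edgeIdeal R G ↔ ∀ e ∈ p.support, ∃ i j, G.Adj i j ∧ e i ≠ 0 ∧ e j ≠ 0 := by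
  classical
  have himage : {p : MvPolynomial σ R | ∃ i j, G.Adj i j ∧ p = X i * X j} =
      (fun e => monomial e 1) ''
        {e | ∃ i j, G.Adj i j ∧ e = Finsupp.single i 1 + Finsupp.single j 1} := by
    ext p
    constructor
    · rintro ⟨i, j, h, rfl⟩
      exact ⟨_, ⟨i, j, h, rfl⟩, by simp [X, monomial_mul]⟩
    · rintro ⟨_, ⟨i, j, h, rfl⟩, rfl⟩
      exact ⟨i, j, h, by simp [X, monomial_mul]⟩
  rw [edgeIdeal, himage, mem_ideal_span_monomial_image]
  refine forall₂_congr fun e _ => ⟨?_, ?_⟩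
  · rintro ⟨_, ⟨i, j, h, rfl⟩, hle⟩
    have hi := hle i
    have hj := hle j
    simp only [Finsupp.add_apply, Finsupp.single_eq_same] at hi hj
    exact ⟨i, j, h, by omega, by omega⟩
  · rintro ⟨i, j, h, hi, hj⟩
    refine ⟨_, ⟨i, j, h, rfl⟩, fun l => ?_⟩
    have hij := h.ne
    rw [Finsupp.add_apply, Finsupp.single_apply, Finsupp.single_apply]
    split_ifs <;> subst_vars <;> first | exact (hij rfl).elim | omega

lemma mem_edgeIdeal_of_X_mul_mem (hv : ∀ j, ¬ G.Adj v j) (hp : X v * p ∈ edgeIdeal R G) :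
    p ∈ edgeIdeal R G := by
  rw [mem_edgeIdeal_iff] at hp ⊢
  intro e he
  obtain ⟨i, j, hij, hi, hj⟩ := hp _ (single_add_mem_support_X_mul he)
  have hvi : v ≠ i := by rintro rfl; exact hv _ hij
  have hvj : v ≠ j := by rintro rfl; exact hv _ hij.symm
  exact ⟨i, j, hij, by simpa [Finsupp.single_apply, hvi] using hi,
    by simpa [Finsupp.single_apply, hvj] using hj⟩

lemma edgeIdeal_eq_sup (G : SimpleGraph σ) (v : σ) :
    edgeIdeal R G = edgeIdeal R (G.deleteIncidenceSet v) ⊔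
      Ideal.span {X v} * Ideal.span (X '' G.neighborSet v) := by
  refine le_antisymm (edgeIdeal_le_iff.2 fun i j hij => ?_)
    (sup_le (edgeIdeal_mono (G.deleteIncidenceSet_le v)) ?_)
  · have hmem (j : σ) (hj : G.Adj v j) :
        X v * X j ∈ Ideal.span {(X v : MvPolynomial σ R)} * Ideal.span (X '' G.neighborSet v) :=
      Ideal.mul_mem_mul (Ideal.mem_span_singleton_self _) (Ideal.subset_span ⟨j, hj, rfl⟩)
    by_cases hi : i = v
    · subst hi
      exact Ideal.mem_sup_right (hmem j hij)
    by_cases hj : j = v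
    · subst hj
      rw [mul_comm (X i)]
      exact Ideal.mem_sup_right (hmem i hij.symm)
    · exact Ideal.mem_sup_left
        (X_mul_X_mem_edgeIdeal (G.deleteIncidenceSet_adj.2 ⟨hij, hi, hj⟩))
  · rw [Ideal.span_mul_span', Ideal.span_le]
    rintro _ ⟨_, rfl, _, ⟨j, hj, rfl⟩, rfl⟩
    exact X_mul_X_mem_edgeIdeal hj

lemma edgeIdeal_inf_span_X_image_le (s : Set σ) :
    edgeIdeal R G ⊓ Ideal.span (X '' s) ≤ idealOfVars σ R * Ideal.span (X '' s) :=
  (le_inf inf_le_right (inf_le_left.trans edgeIdeal_le_sq)).trans span_X_image_inf_sq_le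

lemma mem_edgeIdeal_deleteIncidenceSet_of_X_mul_mem
    (hp : X v * p ∈ edgeIdeal R (G.deleteIncidenceSet v)) :
    p ∈ edgeIdeal R (G.deleteIncidenceSet v) :=
  mem_edgeIdeal_of_X_mul_mem (fun _ h => (G.deleteIncidenceSet_adj.1 h).2.1 rfl) hp

end EdgeIdeals

section VertexSplitting

open MvPolynomial

variable {σ K : Type u} [Field K] {G : SimpleGraph σ} {v : σ}

lemma isExtLinear_span_neighborSet [Finite (G.neighborSet v)] : IsExtLinear (idealOfVars σ K)
    (Ideal.span (X '' G.neighborSet v) : Ideal (MvPolynomial σ K)) := by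
  have := Fintype.ofFinite (G.neighborSet v)
  rw [← G.coe_neighborFinset]
  exact isExtLinear_span_X_image _

variable [Fintype (G.neighborSet v)]

lemma bettiNumber_span_neighborSet (i : ℕ) : bettiNumber (idealOfVars σ K)
    (Ideal.span (X '' G.neighborSet v) : Ideal (MvPolynomial σ K)) i =
      (G.degree v).choose (i + 1) := by
  rw [← G.coe_neighborFinset, bettiNumber_span_X_image, G.card_neighborFinset_eq_degree]

variable (K) (G) (v)

lemma bettiNumber_edgeIdeal_zero :
    bettiNumber (idealOfVars σ K) (edgeIdeal K G) 0 =
      bettiNumber (idealOfVars σ K) (edgeIdeal K (G.deleteIncidenceSet v)) 0 + G.degree v := by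
  rw [edgeIdeal_eq_sup G v, bettiNumber_sup_span_mul_zero (X_mem_idealOfVars v)
    (edgeIdeal_inf_span_X_image_le _) (fun _ => mem_edgeIdeal_deleteIncidenceSet_of_X_mul_mem)
    isExtLinear_span_neighborSet, bettiNumber_span_neighborSet, Nat.choose_one_right]

lemma bettiNumber_edgeIdeal_succ (i : ℕ) :
    bettiNumber (idealOfVars σ K) (edgeIdeal K G) (i + 1) =
      bettiNumber (idealOfVars σ K)
          ↥(edgeIdeal K (G.deleteIncidenceSet v) ⊓ Ideal.span (X '' G.neighborSet v)) i +
        (bettiNumber (idealOfVars σ K) (edgeIdeal K (G.deleteIncidenceSet v)) (i + 1) +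
          (G.degree v).choose (i + 2)) := by
  rw [edgeIdeal_eq_sup G v, bettiNumber_sup_span_mul_succ (X_mem_idealOfVars v)
    (edgeIdeal_inf_span_X_image_le _) (fun _ => mem_edgeIdeal_deleteIncidenceSet_of_X_mul_mem)
    isExtLinear_span_neighborSet, bettiNumber_span_neighborSet]

end VertexSplitting

section CoPathsAndCoCycles

open MvPolynomial

variable {n a : ℕ}

/-- The complement of the path `0 - 1 - ⋯ - (a - 1)`, as a graph on `Fin n` in which the vertices
`a, …, n - 1` are isolated. -/
def coPath (n a : ℕ) : SimpleGraph (Fin n) :=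
  .fromRel fun i j => i.1 + 2 ≤ j.1 ∧ j.1 < a

/-- The complement of the cycle `0 - 1 - ⋯ - (a - 1) - 0`, as a graph on `Fin n` in which the
vertices `a, …, n - 1` are isolated. -/
def coCycle (n a : ℕ) : SimpleGraph (Fin n) :=
  .fromRel fun i j => i.1 + 2 ≤ j.1 ∧ j.1 < a ∧ j.1 + 1 < i.1 + a

lemma coPath_adj {i j : Fin n} :
    (coPath n a).Adj i j ↔ (i.1 + 2 ≤ j.1 ∧ j.1 < a) ∨ (j.1 + 2 ≤ i.1 ∧ i.1 < a) := by
  rw [coPath, SimpleGraph.fromRel_adj, ne_eq, Fin.ext_iff]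
  omega

lemma coCycle_adj {i j : Fin n} : (coCycle n a).Adj i j ↔
    (i.1 + 2 ≤ j.1 ∧ j.1 < a ∧ j.1 + 1 < i.1 + a) ∨
      (j.1 + 2 ≤ i.1 ∧ i.1 < a ∧ i.1 + 1 < j.1 + a) := by
  rw [coCycle, SimpleGraph.fromRel_adj, ne_eq, Fin.ext_iff]
  omega

lemma coCycle_le_coPath : coCycle n a ≤ coPath n a := by
  intro i j h
  rw [coCycle_adj] at h
  rw [coPath_adj]
  omega

lemma coPath_one : coPath n 1 = ⊥ := by
  ext i j
  rw [coPath_adj, SimpleGraph.bot_adj, iff_false]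
  omega

lemma coPath_deleteIncidenceSet (v : Fin n) :
    (coPath n (v.1 + 1)).deleteIncidenceSet v = coPath n v.1 := by
  ext i j
  rw [SimpleGraph.deleteIncidenceSet_adj, coPath_adj, coPath_adj]
  omega

lemma coCycle_deleteIncidenceSet (v : Fin n) :
    (coCycle n (v.1 + 1)).deleteIncidenceSet v = coPath n v.1 := by
  ext i j
  rw [SimpleGraph.deleteIncidenceSet_adj, coCycle_adj, coPath_adj]
  omega

lemma coPath_neighborSet (v : Fin n) :
    (coPath n (v.1 + 1)).neighborSet v = {j | j.1 + 2 ≤ v.1} := by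
  ext j
  rw [SimpleGraph.mem_neighborSet, coPath_adj, Set.mem_ofPred_eq]
  omega

lemma coCycle_neighborSet (v : Fin n) :
    (coCycle n (v.1 + 1)).neighborSet v = {j | 0 < j.1 ∧ j.1 + 2 ≤ v.1} := by
  ext j
  rw [SimpleGraph.mem_neighborSet, coCycle_adj, Set.mem_ofPred_eq]
  omega

lemma coPath_degree (v : Fin n) [Fintype ((coPath n (v.1 + 1)).neighborSet v)] :
    (coPath n (v.1 + 1)).degree v = v.1 - 1 := by
  have h : (coPath n (v.1 + 1)).neighborFinset v = Finset.Iio ⟨v.1 - 1, by omega⟩ := by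
    ext j
    rw [SimpleGraph.mem_neighborFinset, coPath_adj, Finset.mem_Iio, Fin.lt_def]
    dsimp only
    omega
  rw [← SimpleGraph.card_neighborFinset_eq_degree, h, Fin.card_Iio]

lemma coCycle_degree (v : Fin n) [Fintype ((coCycle n (v.1 + 1)).neighborSet v)] :
    (coCycle n (v.1 + 1)).degree v = v.1 - 2 := by
  have h : (coCycle n (v.1 + 1)).neighborFinset v = Finset.Ioo ⟨0, v.pos⟩ ⟨v.1 - 1, by omega⟩ := by
    ext j
    rw [SimpleGraph.mem_neighborFinset, coCycle_adj, Finset.mem_Ioo, Fin.lt_def, Fin.lt_def]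
    dsimp only
    omega
  rw [← SimpleGraph.card_neighborFinset_eq_degree, h, Fin.card_Ioo]
  dsimp only
  omega

variable {R : Type*} [CommRing R]

lemma edgeIdeal_coPath_inf_span (ha : 4 ≤ a) :
    edgeIdeal R (coPath n a) ⊓ Ideal.span (X '' {j : Fin n | 0 < j.1 ∧ j.1 + 2 ≤ a}) =
      edgeIdeal R (coCycle n a) := by
  refine le_antisymm (fun p hp => ?_) (le_inf (edgeIdeal_mono coCycle_le_coPath) ?_)
  · have hpath := mem_edgeIdeal_iff.1 hp.1
    have hvar := mem_ideal_span_X_image.1 hp.2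
    refine mem_edgeIdeal_iff.2 fun e he => ?_
    obtain ⟨i, j, hij, hi, hj⟩ := hpath e he
    obtain ⟨l, ⟨hl₀, hla⟩, hl⟩ := hvar e he
    by_cases hcyc : (coCycle n a).Adj i j
    · exact ⟨i, j, hcyc, hi, hj⟩
    -- Here `{i, j} = {0, a - 1}`, and one of these is a neighbour of `l`.
    by_cases hil : (coCycle n a).Adj i l
    · exact ⟨i, l, hil, hi, hl⟩
    · refine ⟨j, l, ?_, hj, hl⟩
      rw [coPath_adj] at hij
      rw [coCycle_adj] at hcyc hil ⊢
      omega
  · refine edgeIdeal_le_iff.2 fun i j h => ?_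
    rw [coCycle_adj] at h
    by_cases hi : 0 < i.1 ∧ i.1 + 2 ≤ a
    · exact Ideal.mul_mem_right _ _ (Ideal.subset_span ⟨i, hi, rfl⟩)
    · exact Ideal.mul_mem_left _ _ (Ideal.subset_span ⟨j, ⟨by omega, by omega⟩, rfl⟩)

lemma edgeIdeal_coPath_le_span :
    edgeIdeal R (coPath n a) ≤ Ideal.span (X '' {j : Fin n | j.1 + 2 ≤ a}) := by
  refine edgeIdeal_le_iff.2 fun i j h => ?_
  rcases coPath_adj.1 h with h | h
  · exact Ideal.mul_mem_right _ _ (Ideal.subset_span ⟨i, show i.1 + 2 ≤ a by omega, rfl⟩)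
  · exact Ideal.mul_mem_left _ _ (Ideal.subset_span ⟨j, show j.1 + 2 ≤ a by omega, rfl⟩)

variable (K : Type) [Field K]

lemma bettiNumber_coPath (ha : a + 1 ≤ n) (i : ℕ) :
    bettiNumber (idealOfVars (Fin n) K) (edgeIdeal K (coPath n (a + 1))) i =
      ((i + 1) * a.choose (i + 2) : ℕ) := by
  classical
  induction a generalizing i with
  | zero =>
    rw [zero_add, coPath_one, edgeIdeal_bot, bettiNumber_of_subsingleton]
    simp
  | succ a ih =>
    let v : Fin n := ⟨a + 1, ha⟩
    have hdel : (coPath n (a + 1 + 1)).deleteIncidenceSet v = coPath n (a + 1) :=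
      coPath_deleteIncidenceSet v
    have hdeg : (coPath n (a + 1 + 1)).degree v = a := coPath_degree v
    have hle : edgeIdeal K (coPath n (a + 1)) ≤
        Ideal.span (X '' (coPath n (a + 1 + 1)).neighborSet v) := by
      rw [show (coPath n (a + 1 + 1)).neighborSet v = _ from coPath_neighborSet v]
      exact edgeIdeal_coPath_le_span
    cases i with
    | zero =>
      rw [bettiNumber_edgeIdeal_zero K _ v, hdel, hdeg, ih (by omega), ← Nat.cast_add,
        zero_add, Nat.choose_succ_succ a, Nat.choose_one_right]
      congr 1
      ring
    | succ i =>
      rw [bettiNumber_edgeIdeal_succ K _ v, hdel, hdeg, inf_eq_left.2 hle, ih (by omega),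
        ih (by omega), Nat.choose_succ_succ a]
      norm_cast
      ring

lemma bettiNumber_coCycle_zero {b : ℕ} (hb : b + 4 ≤ n) :
    bettiNumber (idealOfVars (Fin n) K) (edgeIdeal K (coCycle n (b + 4))) 0 =
      ((b + 2).choose 2 + (b + 1) : ℕ) := by
  classical
  let v : Fin n := ⟨b + 3, hb⟩
  have hdel : (coCycle n (b + 4)).deleteIncidenceSet v = coPath n (b + 3) :=
    coCycle_deleteIncidenceSet v
  have hdeg : (coCycle n (b + 4)).degree v = b + 1 := coCycle_degree v
  rw [bettiNumber_edgeIdeal_zero K _ v, hdel, hdeg, bettiNumber_coPath K (by omega), zero_add,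
    one_mul, ← Nat.cast_add]

lemma bettiNumber_coCycle_succ {b : ℕ} (hb : b + 5 ≤ n) (i : ℕ) :
    bettiNumber (idealOfVars (Fin n) K) (edgeIdeal K (coCycle n (b + 5))) (i + 1) =
      bettiNumber (idealOfVars (Fin n) K) (edgeIdeal K (coCycle n (b + 4))) i +
        ((i + 2) * (b + 3).choose (i + 3) + (b + 2).choose (i + 2) : ℕ) := by
  classical
  let v : Fin n := ⟨b + 4, hb⟩
  have hdel : (coCycle n (b + 5)).deleteIncidenceSet v = coPath n (b + 4) :=
    coCycle_deleteIncidenceSet v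
  have hdeg : (coCycle n (b + 5)).degree v = b + 2 := coCycle_degree v
  have hnbr : (coCycle n (b + 5)).neighborSet v = {j | 0 < j.1 ∧ j.1 + 2 ≤ b + 4} :=
    coCycle_neighborSet v
  rw [bettiNumber_edgeIdeal_succ K _ v, hdel, hdeg, hnbr, edgeIdeal_coPath_inf_span (by omega),
    bettiNumber_coPath K (by omega), ← Nat.cast_add]

lemma bettiNumber_coCycle_add_choose {b i : ℕ} (hb : b + 4 ≤ n) (hi : i ≤ b) :
    bettiNumber (idealOfVars (Fin n) K) (edgeIdeal K (coCycle n (b + 4))) i +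
      ((b + 2).choose i : ℕ) = ((i + 1) * (b + 3).choose (i + 2) : ℕ) := by
  induction i generalizing b with
  | zero =>
    rw [bettiNumber_coCycle_zero K hb, Nat.choose_succ_succ (b + 2), Nat.choose_one_right,
      Nat.choose_zero_right]
    norm_cast
    ring
  | succ i ih =>
    obtain ⟨b, rfl⟩ : ∃ c, b = c + 1 := ⟨b - 1, by omega⟩
    have hpascal : (i + 2) * (b + 3).choose (i + 3) + (b + 2).choose (i + 2) +
        (b + 3).choose (i + 1) =
          (b + 2).choose i + ((i + 2) * (b + 3).choose (i + 3) + (b + 3).choose (i + 2)) := by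
      rw [Nat.choose_succ_succ (b + 2) i, Nat.choose_succ_succ (b + 2) (i + 1)]
      ring
    have hpascal' : (i + 1) * (b + 3).choose (i + 2) +
        ((i + 2) * (b + 3).choose (i + 3) + (b + 3).choose (i + 2)) =
          (i + 2) * (b + 4).choose (i + 3) := by
      rw [Nat.choose_succ_succ (b + 3) (i + 2)]
      ring
    rw [bettiNumber_coCycle_succ K hb, add_assoc, ← Nat.cast_add, hpascal, Nat.cast_add,
      ← add_assoc, ih (by omega) (by omega), ← Nat.cast_add, hpascal']

lemma coCycle_self_adj_iff {i j : Fin n} :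
    (coCycle n n).Adj i j ↔ i ≠ j ∧ ¬ cycAdj n i j := by
  have hmod (i : Fin n) : (i.1 + 1) % n = if i.1 + 1 = n then 0 else i.1 + 1 := by
    split_ifs with h
    · rw [h, Nat.mod_self]
    · exact Nat.mod_eq_of_lt (by omega)
  rw [coCycle_adj, cycAdj, hmod, hmod, ne_eq, Fin.ext_iff]
  split_ifs <;> omega

lemma cycleIdeal_eq_edgeIdeal : cycleIdeal n K = edgeIdeal K (coCycle n n) := by
  simp only [cycleIdeal, edgeIdeal, coCycle_self_adj_iff, and_assoc]

end CoPathsAndCoCycles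

section MinimalFreeResolution

open MvPolynomial

lemma MinimalFreeResolution.bettiNumber_eq {n : ℕ} {K M : Type} [Field K] [AddCommGroup M]
    [Module (MvPolynomial (Fin n) K) M] (F : MinimalFreeResolution n K M) (d : ℕ) :
    bettiNumber (idealOfVars (Fin n) K) M d = F.b d := by
  have hφ (d : ℕ) : LinearMap.range (F.φ d) ≤ idealOfVars (Fin n) K • ⊤ :=
    range_le_smul_top fun i j => mem_idealOfVars_iff_constantCoeff_eq_zero.2 (F.minimal d i j)
  rw [bettiNumber_eq_finrank hφ F.exact_succ F.exact_zero F.surj, Module.finrank_finsupp_self,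
    Fintype.card_fin]

end MinimalFreeResolution

lemma succ_mul_choose_sub_choose_mul (d t : ℕ) :
    ((d + 1 : ℚ) * (d + t + 3).choose (d + 2) - (d + t + 2).choose d) * (d + t + 3) =
      (d + t + 4).choose (d + 2) * ((d + 1) * (t + 1)) := by
  have hd := Nat.choose_succ_right_eq (d + t + 2) d
  have hd' := Nat.choose_succ_right_eq (d + t + 2) (d + 1)
  rw [show d + t + 2 - d = t + 2 by omega] at hd
  rw [show d + t + 2 - (d + 1) = t + 1 by omega] at hd'
  rw [Nat.choose_succ_succ (d + t + 3) (d + 1), Nat.choose_succ_succ (d + t + 2) d,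
    Nat.choose_succ_succ (d + t + 2) (d + 1)]
  qify at hd hd'
  push_cast
  linear_combination ((d : ℚ) + 2) * hd + ((d : ℚ) + 1) * hd'

lemma MinimalFreeResolution.rank_cycleIdeal_add_choose {K : Type} [Field K] {d t : ℕ}
    (F : MinimalFreeResolution (d + t + 4) K
      (MvPolynomial (Fin (d + t + 4)) K ⧸ cycleIdeal (d + t + 4) K)) :
    F.b (d + 1) + (d + t + 2).choose d = (d + 1) * (d + t + 3).choose (d + 2) := by
  have hle : cycleIdeal (d + t + 4) K ≤ MvPolynomial.idealOfVars (Fin (d + t + 4)) K := by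
    rw [cycleIdeal_eq_edgeIdeal]
    exact edgeIdeal_le_sq.trans (Ideal.pow_le_self two_ne_zero)
  have h := bettiNumber_coCycle_add_choose K (b := d + t) (i := d) le_rfl (by omega)
  rw [← cycleIdeal_eq_edgeIdeal, ← bettiNumber_quotient_succ hle, F.bettiNumber_eq] at h
  exact_mod_cast h

/-- For `n ≥ 5` and `1 ≤ d ≤ n - 3`, the `d`-th total Betti number of `R/Jₙ`
(the rank of the `d`-th module in any minimal free resolution of `R/Jₙ`) equals
`C(n, d+1) * d * (n-d-2) / (n-1)`. -/
theorem betti_formula (K : Type) [Field K] (n d : ℕ) (hn : 5 ≤ n)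
    (hd1 : 1 ≤ d) (hd2 : d ≤ n - 3)
    (F : MinimalFreeResolution n K (MvPolynomial (Fin n) K ⧸ cycleIdeal n K)) :
    (F.b d : ℚ) =
      (n.choose (d + 1) : ℚ) * ((d : ℚ) * ((n : ℚ) - d - 2)) / ((n : ℚ) - 1) := by
  obtain ⟨d, rfl⟩ : ∃ l, d = l + 1 := ⟨d - 1, by omega⟩
  obtain ⟨t, rfl⟩ : ∃ t, n = d + t + 4 := ⟨n - (d + 4), by omega⟩
  have hrank : (F.b (d + 1) : ℚ) + (d + t + 2).choose d =
      (d + 1) * (d + t + 3).choose (d + 2) := by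
    exact_mod_cast F.rank_cycleIdeal_add_choose
  have hn1 : ((d + t + 4 : ℕ) : ℚ) - 1 = d + t + 3 := by push_cast; ring
  rw [hn1, eq_div_iff (by positivity), eq_sub_of_add_eq hrank]
  push_cast
  linear_combination succ_mul_choose_sub_choose_mul d t
end

section
/- For n ≥ 4, the graded Betti numbers of R/J_n satisfy: β_{d,j} = 0 unless (d,j) = (0,0), (d,j) = (n-2, n), or 1 ≤ d ≤ n-3 and j = d+1; moreover β_{n-2,n} = 1. -/
/-- A minimal *graded* free resolution of `R/Jₙ`: a minimal free resolution together
with degrees for the free generators making the differentials and the augmentation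
homogeneous (degree-preserving, where the `i`-th generator of `F_d` has degree
`deg d i`).  The graded Betti number `β_(d,j)` is the number of generators of `F_d`
of degree `j`. -/
structure GradedMinimalFreeResolution (n : ℕ) (K : Type) [Field K] where
  toMFR : MinimalFreeResolution n K (MvPolynomial (Fin n) K ⧸ cycleIdeal n K)
  deg : ∀ d : ℕ, Fin (toMFR.b d) → ℕ
  hom_phi : ∀ (d : ℕ) (i : Fin (toMFR.b (d + 1))) (j : Fin (toMFR.b d)),
    toMFR.φ d (Finsupp.single i 1) j = 0 ∨
      ∃ k, deg (d + 1) i = deg d j + k ∧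
        toMFR.φ d (Finsupp.single i 1) j ∈ MvPolynomial.homogeneousSubmodule (Fin n) K k
  hom_eps : ∀ i : Fin (toMFR.b 0),
    ∃ p ∈ MvPolynomial.homogeneousSubmodule (Fin n) K (deg 0 i),
      Ideal.Quotient.mk (cycleIdeal n K) p = toMFR.ε (Finsupp.single i 1)

/-!
A minimal free resolution `F` of `M` computes the Koszul homology of `M` on the variables: in the
exact sequence `0 → ker ε → F₀ → M → 0` the Koszul complex of the free module `F₀` is contractible
up to constants, and minimality makes the connecting maps isomorphisms, so `F_d ⊗ K` is the
`d`-th Koszul homology of `M`, with matching degrees.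

For a Stanley–Reisner ring the Koszul complex splits by multidegree. It is contractible in a
multidegree that is not squarefree. In the squarefree multidegree with support `σ` it is the
reduced simplicial cochain complex of the induced subcomplex on `σ` (Hochster's formula). An induced
subcomplex of the `n`-cycle is empty, a disjoint union of arcs, or the whole circle. The empty one
gives `(0, 0)`. Arcs only have reduced cohomology in degree `0`, whence the linear strand, which
stops before `#σ = n - 1`, where there is a single arc. The circle only has cohomology in degree
`1`, of rank one, detected by the sum of a cochain around the cycle.
-/

open Finset

section Chains

variable {κ A M N : Type*} [CommRing A] [AddCommGroup M] [Module A M] [AddCommGroup N] [Module A N]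
  {f : M →ₗ[A] N}

/-- The Koszul chains of exterior degree `p`. -/
def koszulChains (κ A M : Type*) [CommRing A] [AddCommGroup M] [Module A M] (p : ℕ) :
    Submodule A (Finset κ → M) where
  carrier := {u | ∀ S, #S ≠ p → u S = 0}
  add_mem' hu hv S hS := by simp [hu S hS, hv S hS]
  zero_mem' _ _ := rfl
  smul_mem' a u hu S hS := by simp [hu S hS]

theorem compLeft_mem_koszulChains {p : ℕ} {u : Finset κ → M} (hu : u ∈ koszulChains κ A M p) :
    f.compLeft _ u ∈ koszulChains κ A N p := by
  intro S hS
  simp [hu S hS]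

theorem compLeft_subtype_ker (u : κ → LinearMap.ker f) :
    f.compLeft κ ((LinearMap.ker f).subtype.compLeft κ u) = 0 := by
  ext i
  simp

theorem exists_compLeft_subtype_ker_eq {v : κ → M} (hv : f.compLeft κ v = 0) :
    ∃ u, (LinearMap.ker f).subtype.compLeft κ u = v :=
  ⟨fun i => ⟨v i, congrFun hv i⟩, rfl⟩

theorem compLeft_subtype_injective (P : Submodule A M) :
    Function.Injective (P.subtype.compLeft κ) :=
  Subtype.val_injective.comp_left

theorem exists_compLeft_eq_of_mem_koszulChains (hf : Function.Surjective f) {p : ℕ}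
    {v : Finset κ → N} (hv : v ∈ koszulChains κ A N p) :
    ∃ u ∈ koszulChains κ A M p, f.compLeft _ u = v := by
  choose u hu using fun S => hf (v S)
  refine ⟨fun S => if #S = p then u S else 0, fun S hS => if_neg hS, funext fun S => ?_⟩
  by_cases hS : #S = p
  · simp [hS, hu]
  · simp [hS, hv S hS]

end Chains

section Koszul

variable {ι : Type*} [LinearOrder ι]

/-- The sign of `e_i ∧ e_S` when sorted: the sign attached to `i ∉ S` in the Koszul differential. -/
def koszulSign (i : ι) (S : Finset ι) : ℤˣ :=
  (-1) ^ #{j ∈ S | j < i}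

theorem koszulSign_insert_of_lt {i j : ι} {S : Finset ι} (hij : i < j) (hi : i ∉ S) :
    koszulSign j (insert i S) = -koszulSign j S := by
  have hi' : i ∉ ({l ∈ S | l < j} : Finset ι) := by simp [hi]
  rw [koszulSign, koszulSign, filter_insert, if_pos hij, card_insert_of_notMem hi', pow_succ,
    mul_neg_one]

theorem koszulSign_insert_of_gt {i j : ι} {S : Finset ι} (hij : j < i) :
    koszulSign j (insert i S) = koszulSign j S := by
  rw [koszulSign, koszulSign, filter_insert, if_neg hij.not_gt]

theorem koszulSign_mul_koszulSign_insert {i j : ι} {S : Finset ι} (hij : i ≠ j)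
    (hi : i ∉ S) (hj : j ∉ S) :
    koszulSign i S * koszulSign j (insert i S) = -(koszulSign j S * koszulSign i (insert j S)) := by
  rcases lt_or_gt_of_ne hij with h | h
  · rw [koszulSign_insert_of_lt h hi, koszulSign_insert_of_gt h, mul_neg, mul_comm]
  · rw [koszulSign_insert_of_lt h hj, koszulSign_insert_of_gt h, mul_neg, neg_neg, mul_comm]

theorem koszulSign_insert_mul_koszulSign_insert {i j : ι} {S : Finset ι} (hij : i ≠ j)
    (hi : i ∉ S) (hj : j ∉ S) :
    koszulSign i (insert j S) * koszulSign j (insert i S) = -(koszulSign j S * koszulSign i S) := by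
  rcases lt_or_gt_of_ne hij with h | h
  · rw [koszulSign_insert_of_lt h hi, koszulSign_insert_of_gt h, mul_neg, mul_comm]
  · rw [koszulSign_insert_of_lt h hj, koszulSign_insert_of_gt h, neg_mul, mul_comm]

theorem koszulSign_eq_one {i : ι} {S : Finset ι} (h : ∀ j ∈ S, i ≤ j) : koszulSign i S = 1 := by
  rw [koszulSign, filter_false_of_mem fun j hj => (h j hj).not_gt, card_empty, pow_zero]

variable {A M N : Type*} [CommRing A] [AddCommGroup M] [Module A M] [AddCommGroup N] [Module A N]

/-- The contraction homotopy in the direction `k`, that is, exterior multiplication by `e_k`. -/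
def koszulCone (A : Type*) {M : Type*} [CommRing A] [AddCommGroup M] [Module A M] (k : ι) :
    (Finset ι → M) →ₗ[A] Finset ι → M :=
  LinearMap.pi fun S =>
    if k ∈ S then koszulSign k (S.erase k) • LinearMap.proj (S.erase k) else 0

theorem koszulCone_insert {k : ι} {S : Finset ι} (hk : k ∉ S) (u : Finset ι → M) :
    koszulCone A k u (insert k S) = koszulSign k S • u S := by
  simp [koszulCone, hk]

theorem koszulCone_of_notMem {k : ι} {S : Finset ι} (hk : k ∉ S) (u : Finset ι → M) :
    koszulCone A k u S = 0 := by
  simp [koszulCone, hk]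

variable [Fintype ι]

/-- The Koszul differential of the family `x` with coefficients in `M`. The chain
`∑ S, e_S ⊗ u S`, over the squarefree exterior monomials `e_S`, is encoded as the function `u`. -/
def koszulDifferential (x : ι → A) : (Finset ι → M) →ₗ[A] Finset ι → M :=
  LinearMap.pi fun S => ∑ i ∈ Sᶜ, koszulSign i S • x i • LinearMap.proj (insert i S)

theorem koszulDifferential_apply (x : ι → A) (u : Finset ι → M) (S : Finset ι) :
    koszulDifferential x u S = ∑ i ∈ Sᶜ, koszulSign i S • x i • u (insert i S) := by
  simp [koszulDifferential]

theorem koszulDifferential_compLeft (x : ι → A) (f : M →ₗ[A] N) (u : Finset ι → M) :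
    koszulDifferential x (f.compLeft _ u) = f.compLeft _ (koszulDifferential x u) := by
  ext S
  simp [koszulDifferential_apply]

theorem koszulDifferential_compLeft_subtype (x : ι → A) (P : Submodule A M) (u : Finset ι → P) :
    koszulDifferential x (P.subtype.compLeft _ u) = P.subtype.compLeft _ (koszulDifferential x u) :=
  koszulDifferential_compLeft x P.subtype u

theorem koszulDifferential_ite_card (x : ι → A) (u : Finset ι → M) (p : ℕ) (S : Finset ι) :
    koszulDifferential x (fun T => if #T = p + 1 then u T else 0) S =
      if #S = p then koszulDifferential x u S else 0 := by
  have hcard (i) (hi : i ∈ Sᶜ) : #(insert i S) = p + 1 ↔ #S = p := by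
    rw [card_insert_of_notMem (mem_compl.1 hi), Nat.add_right_cancel_iff]
  rw [koszulDifferential_apply, koszulDifferential_apply]
  split_ifs with hS
  · exact sum_congr rfl fun i hi => by rw [if_pos ((hcard i hi).2 hS)]
  · exact sum_eq_zero fun i hi => by rw [if_neg (hS <| (hcard i hi).1 ·), smul_zero, smul_zero]

theorem koszulDifferential_koszulDifferential (x : ι → A) (u : Finset ι → M) :
    koszulDifferential x (koszulDifferential x u) = 0 := by
  ext S
  simp only [koszulDifferential_apply, smul_sum, Pi.zero_apply]
  rw [sum_sigma']
  refine sum_involution (fun p _ => ⟨p.2, p.1⟩) ?cancel ?ne ?mem fun _ _ => rfl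
  all_goals
    rintro ⟨i, j⟩ h
    simp only [mem_sigma, mem_compl, mem_insert, not_or] at h
    obtain ⟨hi, hji, hj⟩ := h
  case cancel =>
    have hsign := koszulSign_mul_koszulSign_insert (Ne.symm hji) hi hj
    simp only
    rw [insert_comm j i, smul_comm (x i), smul_comm (x j) (koszulSign i _), smul_smul,
      smul_smul (koszulSign j S), hsign, smul_comm (x i) (x j), Units.neg_smul, neg_add_cancel]
  case ne =>
    simp [hji]
  case mem =>
    simp [hi, hj, Ne.symm hji]

theorem koszulDifferential_koszulCone_add (x : ι → A) (k : ι) (u : Finset ι → M) :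
    koszulDifferential x (koszulCone A k u) + koszulCone A k (koszulDifferential x u) =
      x k • u := by
  ext S
  by_cases hk : k ∈ S
  · obtain ⟨T, hT, rfl⟩ : ∃ T, k ∉ T ∧ insert k T = S := ⟨S.erase k, by simp, insert_erase hk⟩
    have hcompl : Tᶜ = insert k (insert k T)ᶜ := by
      rw [compl_insert, insert_erase (mem_compl.2 hT)]
    have hcancel : ∀ i ∈ (insert k T)ᶜ,
        koszulSign i (insert k T) • x i • koszulCone A k u (insert i (insert k T)) =
          -(koszulSign k T • koszulSign i T • x i • u (insert i T)) := by
      intro i hi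
      obtain ⟨hik, hiT⟩ : i ≠ k ∧ i ∉ T := by simpa using hi
      rw [insert_comm, koszulCone_insert (by simp [Ne.symm hik, hT]), smul_comm (x i), smul_smul,
        smul_smul, koszulSign_insert_mul_koszulSign_insert hik hiT hT, Units.neg_smul]
    rw [Pi.add_apply, koszulCone_insert hT, koszulDifferential_apply, koszulDifferential_apply,
      hcompl, sum_congr rfl hcancel, sum_insert (by simp), smul_add, smul_sum, sum_neg_distrib,
      smul_smul, Int.units_mul_self]
    simp
  · rw [Pi.add_apply, koszulCone_of_notMem hk, add_zero, koszulDifferential_apply, sum_eq_single k]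
    · simp [koszulCone_insert hk, smul_comm (x k), smul_smul]
    · intro i _ hik
      rw [koszulCone_of_notMem (by simp [hk, Ne.symm hik]), smul_zero, smul_zero]
    · simp [hk]

/-- The Koszul cycles of exterior degree `p`. -/
def koszulCycles (x : ι → A) (M : Type*) [AddCommGroup M] [Module A M] (p : ℕ) :
    Submodule A (Finset ι → M) :=
  LinearMap.ker (koszulDifferential x) ⊓ koszulChains ι A M p

/-- The Koszul homology of the family `x` with coefficients in `M`. -/
abbrev koszulHomology (x : ι → A) (M : Type*) [AddCommGroup M] [Module A M] (p : ℕ) : Type _ :=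
  koszulCycles x M p ⧸ (LinearMap.range (koszulDifferential x)).submoduleOf (koszulCycles x M p)

theorem koszulHomology_mk_eq_mk {x : ι → A} {p : ℕ} {u v : koszulCycles x M p} :
    (Submodule.Quotient.mk u : koszulHomology x M p) = Submodule.Quotient.mk v ↔
      (u : Finset ι → M) - v ∈ LinearMap.range (koszulDifferential x) :=
  Submodule.Quotient.eq _

theorem koszulHomology_mk_eq_zero {x : ι → A} {p : ℕ} {u : koszulCycles x M p} :
    (Submodule.Quotient.mk u : koszulHomology x M p) = 0 ↔
      (u : Finset ι → M) ∈ LinearMap.range (koszulDifferential x) :=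
  Submodule.Quotient.mk_eq_zero _

theorem koszulDifferential_mem_koszulChains (x : ι → A) {p : ℕ} {u : Finset ι → M}
    (hu : u ∈ koszulChains ι A M (p + 1)) : koszulDifferential x u ∈ koszulChains ι A M p := by
  intro S hS
  rw [koszulDifferential_apply]
  refine sum_eq_zero fun i hi => ?_
  rw [hu _ (by simpa [card_insert_of_notMem (mem_compl.1 hi)]), smul_zero, smul_zero]

end Koszul

section Homotopy

open MvPolynomial

variable {ι R : Type*} [LinearOrder ι] [CommRing R]

/-- Division by the smallest variable: a monomial whose smallest variable is `X k` is divided by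
`X k`, and every other monomial is sent to zero. -/
noncomputable def divHead (R : Type*) [CommRing R] (k : ι) :
    MvPolynomial ι R →ₗ[R] MvPolynomial ι R :=
  (basisMonomials ι R).constr R fun m =>
    if m k ≠ 0 ∧ ∀ j ∈ m.support, k ≤ j then monomial (m - Finsupp.single k 1) 1 else 0

theorem divHead_monomial (k : ι) (a : ι →₀ ℕ) (r : R) :
    divHead R k (monomial a r) =
      if a k ≠ 0 ∧ ∀ j ∈ a.support, k ≤ j then monomial (a - Finsupp.single k 1) r else 0 := by
  have hr : monomial a r = r • basisMonomials ι R a := by simp [smul_monomial]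
  rw [hr, map_smul, divHead, Module.Basis.constr_basis]
  split_ifs <;> simp [smul_monomial]

theorem coeff_divHead (k : ι) (f : MvPolynomial ι R) (m : ι →₀ ℕ) :
    coeff m (divHead R k f) =
      if ∀ j ∈ m.support, k ≤ j then coeff (m + Finsupp.single k 1) f else 0 := by
  induction f using MvPolynomial.induction_on' with
  | add p q hp hq => rw [map_add, coeff_add, hp, hq, coeff_add]; split_ifs <;> simp
  | monomial a r =>
    rw [divHead_monomial, coeff_monomial]
    by_cases ha : a = m + Finsupp.single k 1
    · subst ha
      have hsupp :
          (∀ j ∈ (m + Finsupp.single k 1).support, k ≤ j) ↔ ∀ j ∈ m.support, k ≤ j := by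
        refine forall_congr' fun j => ?_
        rcases eq_or_ne k j with rfl | hj <;> simp [*]
      by_cases h : ∀ j ∈ m.support, k ≤ j
      · rw [if_pos ⟨by simp, hsupp.2 h⟩, if_pos h, add_tsub_cancel_right, coeff_monomial,
          if_pos rfl, if_pos rfl]
      · rw [if_neg (h <| hsupp.1 ·.2), if_neg h, coeff_zero]
    · have hne (hk : a k ≠ 0) : a - Finsupp.single k 1 ≠ m := fun h => ha <| by
        rw [← h, tsub_add_cancel_of_le (by simpa [Nat.one_le_iff_ne_zero])]
      split_ifs with h <;> simp [hne, h]

theorem divHead_X_mul_of_lt {i k : ι} (hik : i < k) (f : MvPolynomial ι R) :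
    divHead R k (X i * f) = 0 := by
  ext m
  rw [coeff_divHead, coeff_zero, ite_eq_right_iff]
  intro h
  have hi : i ∉ m.support := fun hi => (h i hi).not_gt hik
  rw [coeff_X_mul', if_neg (by simpa [hik.ne'] using hi)]

theorem divHead_X_mul_of_gt {i k : ι} (hik : k < i) (f : MvPolynomial ι R) :
    divHead R k (X i * f) = X i * divHead R k f := by
  ext m
  rw [coeff_divHead, coeff_X_mul', coeff_X_mul', coeff_divHead]
  by_cases hi : i ∈ m.support
  · have hsupp : (∀ j ∈ (m - Finsupp.single i 1).support, k ≤ j) ↔ ∀ j ∈ m.support, k ≤ j := by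
      refine forall_congr' fun j => ?_
      rcases eq_or_ne i j with rfl | hj <;> simp [*, hik.le]
    have hm : m + Finsupp.single k 1 - Finsupp.single i 1 =
        m - Finsupp.single i 1 + Finsupp.single k 1 :=
      tsub_add_eq_add_tsub (by simpa [Nat.one_le_iff_ne_zero] using hi) |>.symm
    simp only [hsupp, hm, if_pos hi, if_pos (show i ∈ (m + Finsupp.single k 1).support by simp_all)]
  · rw [if_neg (c := i ∈ _) (by simpa [hik.ne] using hi), if_neg hi, ite_self]

theorem coeff_X_mul_divHead (k : ι) (f : MvPolynomial ι R) (m : ι →₀ ℕ) :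
    coeff m (X k * divHead R k f) = if m.support.min = k then coeff m f else 0 := by
  rw [coeff_X_mul', coeff_divHead]
  by_cases hk : k ∈ m.support
  · have hmin : (∀ j ∈ (m - Finsupp.single k 1).support, k ≤ j) ↔ m.support.min = k := by
      rw [le_antisymm_iff, and_iff_right (min_le hk), Finset.le_min_iff]
      refine forall_congr' fun j => ?_
      rcases eq_or_ne k j with rfl | hj <;> simp [*]
    have hm : m - Finsupp.single k 1 + Finsupp.single k 1 = m :=
      tsub_add_cancel_of_le (by simpa [Nat.one_le_iff_ne_zero] using hk)
    simp only [hmin, hm, if_pos hk]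
  · rw [if_neg hk, if_neg fun h => hk (mem_of_min h)]

theorem coeff_divHead_X_mul (k : ι) (f : MvPolynomial ι R) (m : ι →₀ ℕ) :
    coeff m (divHead R k (X k * f)) = if ∀ j ∈ m.support, k ≤ j then coeff m f else 0 := by
  rw [coeff_divHead, add_comm m, coeff_X_mul]

variable {α : Type*}

/-- The chain `e_∅ ⊗ c` with constant coefficients. -/
noncomputable def constantChain (ι R α : Type*) [CommRing R] [DecidableEq ι] :
    (α →₀ R) →ₗ[R] Finset ι → α →₀ MvPolynomial ι R :=
  LinearMap.single R _ ∅ ∘ₗ Finsupp.mapRange.linearMap (Algebra.linearMap R _)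

/-- The contracting homotopy of the Koszul complex of a free module on the variables: it divides
by the smallest variable, and multiplies by the corresponding exterior generator, whenever the
latter precedes the exterior generators that are already present. -/
noncomputable def koszulHomotopy (ι R α : Type*) [CommRing R] [LinearOrder ι] :
    (Finset ι → α →₀ MvPolynomial ι R) →ₗ[R] Finset ι → α →₀ MvPolynomial ι R :=
  LinearMap.pi fun S =>
    if hS : S.Nonempty then
      Finsupp.mapRange.linearMap (divHead R (S.min' hS)) ∘ₗ LinearMap.proj (S.erase (S.min' hS))
    else 0

theorem koszulHomotopy_empty (u : Finset ι → α →₀ MvPolynomial ι R) :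
    koszulHomotopy ι R α u ∅ = 0 := by
  simp [koszulHomotopy]

theorem koszulHomotopy_insert_apply {k : ι} {S : Finset ι} (hk : ∀ i ∈ S, k < i)
    (u : Finset ι → α →₀ MvPolynomial ι R) (l : α) :
    koszulHomotopy ι R α u (insert k S) l = divHead R k (u S l) := by
  have hmin : (insert k S).min' (insert_nonempty k S) = k :=
    le_antisymm (min'_le _ _ (mem_insert_self k S))
      (le_min' _ _ _ fun i hi => (mem_insert.1 hi).elim (·.ge) fun hi => (hk i hi).le)
  have hkS : k ∉ S := fun h => (hk k h).false
  simp [koszulHomotopy, hmin, hkS]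

theorem constantChain_of_ne_empty {S : Finset ι} (hS : S ≠ ∅) (c : α →₀ R) :
    constantChain ι R α c S = 0 := by
  simp [constantChain, hS]

theorem koszulHomotopy_mem_koszulChains {p : ℕ} {u : Finset ι → α →₀ MvPolynomial ι R}
    (hu : u ∈ koszulChains ι (MvPolynomial ι R) _ p) :
    koszulHomotopy ι R α u ∈ koszulChains ι (MvPolynomial ι R) _ (p + 1) := by
  intro S hS
  induction S using Finset.induction_on_min with
  | empty => exact koszulHomotopy_empty u
  | insert k S hk _ =>
    rw [card_insert_of_notMem fun h => (hk k h).false] at hS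
    ext1 l
    simp [koszulHomotopy_insert_apply hk, hu S (by simpa using hS)]

variable [Fintype ι]

theorem sum_X_mul_divHead_add_divHead_X_mul (k : ι) (f : MvPolynomial ι R) :
    ∑ i with i < k, X i * divHead R i f + divHead R k (X k * f) = f := by
  ext m
  simp only [coeff_add, coeff_sum, coeff_X_mul_divHead, coeff_divHead_X_mul]
  rcases m.support.eq_empty_or_nonempty with hm | hm
  · simp [hm]
  · obtain ⟨a, ha⟩ := min_of_nonempty hm
    have hle : (∀ j ∈ m.support, k ≤ j) ↔ k ≤ a := by
      rw [← WithTop.coe_le_coe, ← ha, Finset.le_min_iff]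
      simp only [WithTop.coe_le_coe]
    simp only [ha, hle, WithTop.coe_inj]
    rcases lt_or_ge a k with hak | hak
    · simp [hak, hak.not_ge]
    · simp [hak, hak.not_gt]

theorem sum_X_mul_divHead_add_C (f : MvPolynomial ι R) :
    ∑ i, X i * divHead R i f + C (constantCoeff f) = f := by
  ext m
  simp only [coeff_add, coeff_sum, coeff_X_mul_divHead]
  rcases eq_or_ne m 0 with rfl | hm
  · simp [constantCoeff_eq]
  · obtain ⟨a, ha⟩ := min_of_nonempty (Finsupp.support_nonempty_iff.2 hm)
    simp [ha, WithTop.coe_inj, hm.symm]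

theorem koszulDifferential_constantChain (x : ι → MvPolynomial ι R) (c : α →₀ R) :
    koszulDifferential x (constantChain ι R α c) = 0 := by
  ext1 S
  rw [koszulDifferential_apply]
  exact sum_eq_zero fun i _ => by
    rw [constantChain_of_ne_empty (insert_ne_empty i S), smul_zero, smul_zero]

theorem koszulDifferential_koszulHomotopy_empty_add (u : Finset ι → α →₀ MvPolynomial ι R)
    (l : α) :
    koszulDifferential (X (R := R)) (koszulHomotopy ι R α u) ∅ l + C (constantCoeff (u ∅ l)) =
      u ∅ l := by
  conv_rhs => rw [← sum_X_mul_divHead_add_C (u ∅ l)]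
  rw [koszulDifferential_apply, compl_empty, Finsupp.finsetSum_apply]
  congr! 2 with i
  rw [koszulSign_eq_one (by simp), one_smul, Finsupp.smul_apply,
    koszulHomotopy_insert_apply (by simp), smul_eq_mul]

theorem koszulDifferential_koszulHomotopy_insert_add {k : ι} {S : Finset ι} (hk : ∀ i ∈ S, k < i)
    (u : Finset ι → α →₀ MvPolynomial ι R) (l : α) :
    koszulDifferential (X (R := R)) (koszulHomotopy ι R α u) (insert k S) l +
      koszulHomotopy ι R α (koszulDifferential (X (R := R)) u) (insert k S) l =
        u (insert k S) l := by
  have hkS : k ∉ S := fun h => (hk k h).false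
  have hcompl : Sᶜ = insert k (insert k S)ᶜ := by
    rw [compl_insert, insert_erase (mem_compl.2 hkS)]
  have hterm : ∀ i ∈ (insert k S)ᶜ,
      koszulSign i (insert k S) • (X i * koszulHomotopy ι R α u (insert i (insert k S)) l) +
        koszulSign i S • divHead R k (X i * u (insert i S) l) =
      if i < k then X i * divHead R i (u (insert k S) l) else 0 := by
    intro i hi
    have hik : i ≠ k := fun h => mem_compl.1 hi (h ▸ mem_insert_self k S)
    rcases hik.lt_or_gt with hik | hki
    · have hiS : ∀ j ∈ insert k S, i < j :=
        forall_mem_insert _ _ _ |>.2 ⟨hik, fun j hj => hik.trans (hk j hj)⟩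
      rw [if_pos hik, koszulSign_eq_one fun j hj => (hiS j hj).le, one_smul,
        koszulHomotopy_insert_apply hiS, divHead_X_mul_of_lt hik, smul_zero, add_zero]
    · rw [if_neg hki.not_gt, insert_comm, koszulHomotopy_insert_apply
        (forall_mem_insert _ _ _ |>.2 ⟨hki, hk⟩), koszulSign_insert_of_lt hki hkS,
        divHead_X_mul_of_gt hki, Units.neg_smul, neg_add_cancel]
  have hlt : ({i ∈ (insert k S)ᶜ | i < k} : Finset ι) = ({i | i < k} : Finset ι) := by
    ext i
    simp only [mem_filter, mem_compl, mem_univ, true_and, and_iff_right_iff_imp]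
    exact fun hik => by simpa [hik.ne] using fun h => (hk i h).not_gt hik
  rw [koszulHomotopy_insert_apply hk, koszulDifferential_apply, koszulDifferential_apply,
    Finsupp.finsetSum_apply, Finsupp.finsetSum_apply, hcompl, sum_insert (by simp), map_add,
    add_left_comm, map_sum, koszulSign_eq_one fun i hi => (hk i hi).le, one_smul]
  simp only [Finsupp.smul_apply, smul_eq_mul, LinearMap.map_smul_of_tower]
  rw [← sum_add_distrib, sum_congr rfl hterm, ← sum_filter, hlt, add_comm,
    sum_X_mul_divHead_add_divHead_X_mul]

theorem koszulDifferential_koszulHomotopy_add (u : Finset ι → α →₀ MvPolynomial ι R) :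
    koszulDifferential (X (R := R)) (koszulHomotopy ι R α u) +
      koszulHomotopy ι R α (koszulDifferential (X (R := R)) u) +
      constantChain ι R α ((u ∅).mapRange constantCoeff (map_zero _)) = u := by
  ext S l : 2
  induction S using Finset.induction_on_min with
  | empty =>
    simpa [koszulHomotopy_empty, constantChain] using
      koszulDifferential_koszulHomotopy_empty_add u l
  | insert k S hk _ =>
    simpa [constantChain] using koszulDifferential_koszulHomotopy_insert_add hk u l

theorem koszulDifferential_koszulHomotopy_of_constantCoeff_eq_zero
    {u : Finset ι → α →₀ MvPolynomial ι R} (hu : ∀ l, constantCoeff (u ∅ l) = 0) :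
    koszulDifferential (X (R := R)) (koszulHomotopy ι R α u) =
      u - koszulHomotopy ι R α (koszulDifferential (X (R := R)) u) := by
  have hzero : (u ∅).mapRange constantCoeff (map_zero _) = 0 := by ext l; simp [hu]
  have h := koszulDifferential_koszulHomotopy_add u
  rw [hzero, map_zero, add_zero] at h
  exact eq_sub_of_add_eq h

theorem koszulDifferential_koszulHomotopy_subtype
    {P : Submodule (MvPolynomial ι R) (α →₀ MvPolynomial ι R)}
    (hP : ∀ x ∈ P, ∀ l, constantCoeff (x l) = 0) (u : Finset ι → P) :
    koszulDifferential (X (R := R)) (koszulHomotopy ι R α (P.subtype.compLeft _ u)) =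
      P.subtype.compLeft _ u -
        koszulHomotopy ι R α (P.subtype.compLeft _ (koszulDifferential (X (R := R)) u)) := by
  rw [koszulDifferential_koszulHomotopy_of_constantCoeff_eq_zero (hP _ (u ∅).2),
    koszulDifferential_compLeft_subtype]

end Homotopy

section DimensionShift

open MvPolynomial

variable {ι R α M : Type*} [LinearOrder ι] [CommRing R] [AddCommGroup M]
  [Module (MvPolynomial ι R) M] [Module R M] [IsScalarTower R (MvPolynomial ι R) M]
  {q : (α →₀ MvPolynomial ι R) →ₗ[MvPolynomial ι R] M}

/-- The connecting map, on the level of Koszul chains, of the exact sequence `0 → ker q → F → M → 0`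
given by `q : F → M` with `F` free. -/
noncomputable def koszulConnecting (q : (α →₀ MvPolynomial ι R) →ₗ[MvPolynomial ι R] M) :
    (Finset ι → LinearMap.ker q) →ₗ[R] Finset ι → M :=
  (q.restrictScalars R).compLeft _ ∘ₗ koszulHomotopy ι R α ∘ₗ
    ((LinearMap.ker q).subtype.restrictScalars R).compLeft _

theorem koszulConnecting_apply (u : Finset ι → LinearMap.ker q) :
    koszulConnecting q u =
      q.compLeft _ (koszulHomotopy ι R α ((LinearMap.ker q).subtype.compLeft _ u)) := rfl

theorem koszulConnecting_mem_koszulChains {p : ℕ} {u : Finset ι → LinearMap.ker q}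
    (hu : u ∈ koszulChains ι (MvPolynomial ι R) _ p) :
    koszulConnecting q u ∈ koszulChains ι (MvPolynomial ι R) M (p + 1) := by
  intro S hS
  rw [koszulConnecting_apply, LinearMap.compLeft_apply, Function.comp_apply,
    koszulHomotopy_mem_koszulChains (fun T hT => by simp [hu T hT]) S hS, map_zero]

variable [Fintype ι]

theorem exists_sub_koszulConnecting_mem_range (hq : Function.Surjective q) {p : ℕ}
    {v : Finset ι → M} (hv : v ∈ koszulCycles (X (R := R)) M (p + 1)) :
    ∃ u ∈ koszulCycles (X (R := R)) (LinearMap.ker q) p,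
      v - koszulConnecting q u ∈ LinearMap.range (koszulDifferential (X (R := R))) := by
  obtain ⟨hv, hvp⟩ := hv
  obtain ⟨w, hw, rfl⟩ := exists_compLeft_eq_of_mem_koszulChains hq hvp
  have hker : q.compLeft _ (koszulDifferential (X (R := R)) w) = 0 := by
    rw [← koszulDifferential_compLeft]
    exact hv
  obtain ⟨u, hu⟩ := exists_compLeft_subtype_ker_eq hker
  have hw0 : w ∅ = 0 := hw ∅ (by simp)
  refine ⟨u, ⟨?cycle, ?chain⟩, ?boundary⟩
  case cycle =>
    refine compLeft_subtype_injective (LinearMap.ker q) ?_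
    rw [← koszulDifferential_compLeft_subtype, hu,
      koszulDifferential_koszulDifferential, map_zero]
  case chain =>
    intro S hS
    refine Subtype.val_injective ?_
    exact (congrFun hu S).trans (koszulDifferential_mem_koszulChains _ hw S hS)
  case boundary =>
    refine ⟨q.compLeft _ (koszulHomotopy ι R α w), ?_⟩
    rw [koszulDifferential_compLeft, koszulDifferential_koszulHomotopy_of_constantCoeff_eq_zero
      (by simp [hw0]), map_sub, koszulConnecting_apply, hu]

variable (hmin : ∀ x ∈ LinearMap.ker q, ∀ l, constantCoeff (x l) = 0)
include hmin

theorem koszulDifferential_koszulConnecting (u : Finset ι → LinearMap.ker q) :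
    koszulDifferential (X (R := R)) (koszulConnecting q u) =
      -koszulConnecting q (koszulDifferential (X (R := R)) u) := by
  rw [koszulConnecting_apply, koszulDifferential_compLeft,
    koszulDifferential_koszulHomotopy_subtype hmin, map_sub, compLeft_subtype_ker, zero_sub,
    koszulConnecting_apply]

theorem koszulConnecting_mem_koszulCycles {p : ℕ} {u : Finset ι → LinearMap.ker q}
    (hu : u ∈ koszulCycles (X (R := R)) (LinearMap.ker q) p) :
    koszulConnecting q u ∈ koszulCycles (X (R := R)) M (p + 1) := by
  refine ⟨LinearMap.mem_ker.2 ?_, koszulConnecting_mem_koszulChains hu.2⟩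
  rw [koszulDifferential_koszulConnecting hmin, LinearMap.mem_ker.1 hu.1,
    map_zero, neg_zero]

theorem koszulConnecting_mem_range {u : Finset ι → LinearMap.ker q}
    (hu : u ∈ LinearMap.range (koszulDifferential (X (R := R)))) :
    koszulConnecting q u ∈ LinearMap.range (koszulDifferential (X (R := R))) := by
  obtain ⟨v, rfl⟩ := hu
  exact ⟨-koszulConnecting q v, by rw [map_neg, koszulDifferential_koszulConnecting hmin, neg_neg]⟩

theorem mem_range_of_koszulConnecting_mem_range (hq : Function.Surjective q) {p : ℕ}
    {u : Finset ι → LinearMap.ker q}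
    (hu : u ∈ koszulCycles (X (R := R)) (LinearMap.ker q) p)
    (h : koszulConnecting q u ∈ LinearMap.range (koszulDifferential (X (R := R)))) :
    u ∈ LinearMap.range (koszulDifferential (X (R := R))) := by
  obtain ⟨v, hv⟩ := h
  obtain ⟨w, rfl⟩ : ∃ w, q.compLeft _ w = v := hq.comp_left v
  have hker : q.compLeft _ (koszulHomotopy ι R α ((LinearMap.ker q).subtype.compLeft _ u) -
      koszulDifferential (X (R := R)) w) = 0 := by
    rw [map_sub, ← koszulConnecting_apply, ← koszulDifferential_compLeft, hv, sub_self]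
  obtain ⟨t, ht⟩ := exists_compLeft_subtype_ker_eq hker
  refine ⟨t, compLeft_subtype_injective (LinearMap.ker q) ?_⟩
  rw [← koszulDifferential_compLeft_subtype, ht, map_sub,
    koszulDifferential_koszulDifferential, sub_zero,
    koszulDifferential_koszulHomotopy_subtype hmin, LinearMap.mem_ker.1 hu.1, map_zero, map_zero,
    sub_zero]

end DimensionShift

namespace MinimalFreeResolution

open MvPolynomial

variable {n : ℕ} {K : Type} [Field K] {M : Type} [AddCommGroup M]
  [Module (MvPolynomial (Fin n) K) M]

theorem constantCoeff_φ (F : MinimalFreeResolution n K M) (d : ℕ)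
    (x : Fin (F.b (d + 1)) →₀ MvPolynomial (Fin n) K) (l : Fin (F.b d)) :
    constantCoeff (F.φ d x l) = 0 := by
  induction x using Finsupp.induction_linear with
  | zero => simp
  | add x y hx hy => rw [map_add, Finsupp.add_apply, map_add, hx, hy, add_zero]
  | single i r =>
    rw [← mul_one r, ← smul_eq_mul, ← Finsupp.smul_single, map_smul, Finsupp.smul_apply,
      smul_eq_mul, map_mul, F.minimal, mul_zero]

theorem constantCoeff_of_mem_ker_ε (F : MinimalFreeResolution n K M)
    {x : Fin (F.b 0) →₀ MvPolynomial (Fin n) K} (hx : x ∈ LinearMap.ker F.ε) (l : Fin (F.b 0)) :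
    constantCoeff (x l) = 0 := by
  obtain ⟨y, rfl⟩ := F.exact_zero ▸ hx
  exact F.constantCoeff_φ 0 y l

/-- The minimal free resolution of the first syzygy module. -/
noncomputable def tail (F : MinimalFreeResolution n K M) :
    MinimalFreeResolution n K (LinearMap.ker F.ε) where
  b d := F.b (d + 1)
  φ d := F.φ (d + 1)
  ε := (F.φ 0).codRestrict _ fun x => F.exact_zero ▸ LinearMap.mem_range_self _ x
  surj y := by
    obtain ⟨x, hx⟩ : (y : Fin (F.b 0) →₀ _) ∈ LinearMap.range (F.φ 0) := F.exact_zero ▸ y.2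
    exact ⟨x, Subtype.ext hx⟩
  exact_zero := by rw [LinearMap.ker_codRestrict, F.exact_succ]
  exact_succ d := F.exact_succ (d + 1)
  minimal d := F.minimal (d + 1)

/-- The Koszul cycle with coefficients in `M` whose class corresponds to the element `c` of
`F_d ⊗ K` under the isomorphism of `F_d ⊗ K` with the Koszul homology of `M` in degree `d`. -/
noncomputable def bettiCycle :
    ∀ {M : Type} [AddCommGroup M] [Module (MvPolynomial (Fin n) K) M] [Module K M]
      [IsScalarTower K (MvPolynomial (Fin n) K) M] (F : MinimalFreeResolution n K M) (d : ℕ),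
      (Fin (F.b d) →₀ K) →ₗ[K] Finset (Fin n) → M
  | _, _, _, _, _, F, 0 => (F.ε.restrictScalars K).compLeft _ ∘ₗ constantChain (Fin n) K _
  | _, _, _, _, _, F, d + 1 => koszulConnecting F.ε ∘ₗ F.tail.bettiCycle d

variable [Module K M] [IsScalarTower K (MvPolynomial (Fin n) K) M]

theorem bettiCycle_zero (F : MinimalFreeResolution n K M) (c : Fin (F.b 0) →₀ K) :
    F.bettiCycle 0 c = F.ε.compLeft _ (constantChain (Fin n) K _ c) := rfl

theorem bettiCycle_mem_koszulCycles (F : MinimalFreeResolution n K M) (d : ℕ)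
    (c : Fin (F.b d) →₀ K) : F.bettiCycle d c ∈ koszulCycles (X (R := K)) M d := by
  induction d generalizing M with
  | zero =>
    refine ⟨LinearMap.mem_ker.2 ?_, fun S hS => ?_⟩
    · rw [bettiCycle_zero, koszulDifferential_compLeft, koszulDifferential_constantChain, map_zero]
    · rw [bettiCycle_zero, LinearMap.compLeft_apply, Function.comp_apply,
        constantChain_of_ne_empty (by rintro rfl; simp at hS), map_zero]
  | succ d ih =>
    exact koszulConnecting_mem_koszulCycles (fun _ => F.constantCoeff_of_mem_ker_ε) (ih F.tail c)

theorem eq_zero_of_bettiCycle_mem_range (F : MinimalFreeResolution n K M) {d : ℕ}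
    {c : Fin (F.b d) →₀ K}
    (hc : F.bettiCycle d c ∈ LinearMap.range (koszulDifferential (X (R := K)))) : c = 0 := by
  induction d generalizing M with
  | zero =>
    obtain ⟨v, hv⟩ := hc
    obtain ⟨w, rfl⟩ : ∃ w, F.ε.compLeft _ w = v := F.surj.comp_left v
    have hker : constantChain (Fin n) K _ c ∅ - koszulDifferential (X (R := K)) w ∅ ∈
        LinearMap.ker F.ε := by
      rw [koszulDifferential_compLeft, bettiCycle_zero] at hv
      rw [LinearMap.mem_ker, map_sub, sub_eq_zero]
      exact (congrFun hv ∅).symm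
    ext l
    simpa [constantChain, koszulDifferential_apply] using F.constantCoeff_of_mem_ker_ε hker l
  | succ d ih =>
    refine ih F.tail (mem_range_of_koszulConnecting_mem_range
      (fun _ => F.constantCoeff_of_mem_ker_ε) F.surj (F.tail.bettiCycle_mem_koszulCycles d c) hc)

theorem exists_sub_bettiCycle_mem_range (F : MinimalFreeResolution n K M) {d : ℕ}
    {u : Finset (Fin n) → M} (hu : u ∈ koszulCycles (X (R := K)) M d) :
    ∃ c, u - F.bettiCycle d c ∈ LinearMap.range (koszulDifferential (X (R := K))) := by
  induction d generalizing M with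
  | zero =>
    obtain ⟨w, hw, rfl⟩ := exists_compLeft_eq_of_mem_koszulChains F.surj hu.2
    have hzero : koszulDifferential (X (R := K)) w = 0 := by
      ext1 S
      rw [koszulDifferential_apply]
      exact sum_eq_zero fun i _ => by simp [hw (insert i S) (by simp)]
    have h := koszulDifferential_koszulHomotopy_add w
    rw [hzero, map_zero, add_zero] at h
    refine ⟨(w ∅).mapRange constantCoeff (map_zero _), F.ε.compLeft _ (koszulHomotopy _ K _ w), ?_⟩
    rw [bettiCycle_zero, koszulDifferential_compLeft, ← map_sub, ← eq_sub_of_add_eq h]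
  | succ d ih =>
    obtain ⟨v, hv, huv⟩ := exists_sub_koszulConnecting_mem_range F.surj hu
    obtain ⟨c, hc⟩ := ih F.tail hv
    refine ⟨c, ?_⟩
    have h := add_mem huv (koszulConnecting_mem_range (fun _ => F.constantCoeff_of_mem_ker_ε) hc)
    have hsub : koszulConnecting F.ε (v - F.tail.bettiCycle d c) =
        koszulConnecting F.ε v - F.bettiCycle (d + 1) c :=
      (koszulConnecting F.ε).map_sub v _
    rwa [hsub, sub_add_sub_cancel] at h

theorem finrank_koszulHomology (F : MinimalFreeResolution n K M) (d : ℕ) :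
    Module.finrank K (koszulHomology (X (R := K) (σ := Fin n)) M d) = F.b d := by
  let f : (Fin (F.b d) →₀ K) →ₗ[K] koszulHomology (X (R := K) (σ := Fin n)) M d :=
    (Submodule.mkQ _).restrictScalars K ∘ₗ
      (F.bettiCycle d).codRestrict ((koszulCycles (X (R := K)) M d).restrictScalars K)
        (F.bettiCycle_mem_koszulCycles d)
  have hinj : Function.Injective f := (injective_iff_map_eq_zero f).2 fun c hc =>
    F.eq_zero_of_bettiCycle_mem_range (koszulHomology_mk_eq_zero.1 hc)
  have hsurj : Function.Surjective f := fun x => by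
    obtain ⟨u, rfl⟩ := Submodule.Quotient.mk_surjective _ x
    obtain ⟨c, hc⟩ := F.exists_sub_bettiCycle_mem_range u.2
    exact ⟨c, (koszulHomology_mk_eq_mk.2 hc).symm⟩
  rw [← (LinearEquiv.ofBijective f ⟨hinj, hsurj⟩).finrank_eq, Module.finrank_finsupp_self,
    Fintype.card_fin]

end MinimalFreeResolution

section Grading

open MvPolynomial

variable {ι R α : Type*} [CommRing R]

/-- The homogeneous polynomials of degree `j`; the degree is an integer since it is shifted by the
degrees of generators. -/
noncomputable def gradedPart (ι R : Type*) [CommRing R] (j : ℤ) : Submodule R (MvPolynomial ι R) :=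
  restrictSupport R {m | (m.degree : ℤ) = j}

theorem mem_gradedPart {j : ℤ} {p : MvPolynomial ι R} :
    p ∈ gradedPart ι R j ↔ ∀ m, coeff m p ≠ 0 → (m.degree : ℤ) = j := by
  simp [gradedPart, mem_restrictSupport_iff, Set.subset_def]

theorem monomial_mul_mem_gradedPart {j : ℤ} {p : MvPolynomial ι R} (hp : p ∈ gradedPart ι R j)
    (a : ι →₀ ℕ) : monomial a (1 : R) * p ∈ gradedPart ι R (a.degree + j) := by
  refine mem_gradedPart.2 fun m h => ?_
  rw [coeff_monomial_mul', one_mul, ite_ne_right_iff] at h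
  obtain ⟨ham, h⟩ := h
  rw [← mem_gradedPart.1 hp _ h, ← Nat.cast_add, ← map_add, add_tsub_cancel_of_le ham]

theorem divHead_mem_gradedPart [LinearOrder ι] {j : ℤ} {p : MvPolynomial ι R}
    (hp : p ∈ gradedPart ι R j) (k : ι) : divHead R k p ∈ gradedPart ι R (j - 1) := by
  refine mem_gradedPart.2 fun m h => ?_
  rw [coeff_divHead, ite_ne_right_iff] at h
  have hdeg := mem_gradedPart.1 hp _ h.2
  rw [map_add, Finsupp.degree_single, Nat.cast_add, Nat.cast_one] at hdeg
  exact eq_sub_of_add_eq hdeg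

/-- The component of degree `j` of the graded free module with generators of degrees `w`. -/
noncomputable def freeGradedPart (ι R : Type*) {α : Type*} [CommRing R] (w : α → ℤ) (j : ℤ) :
    Submodule R (α →₀ MvPolynomial ι R) :=
  ⨅ l, (gradedPart ι R (j - w l)).comap (Finsupp.lapply l)

theorem mem_freeGradedPart {w : α → ℤ} {j : ℤ} {x : α →₀ MvPolynomial ι R} :
    x ∈ freeGradedPart ι R w j ↔ ∀ l, x l ∈ gradedPart ι R (j - w l) := by
  simp [freeGradedPart]

theorem monomial_smul_mem_freeGradedPart {w : α → ℤ} {j : ℤ} {x : α →₀ MvPolynomial ι R}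
    (hx : x ∈ freeGradedPart ι R w j) (a : ι →₀ ℕ) :
    monomial a (1 : R) • x ∈ freeGradedPart ι R w (a.degree + j) :=
  mem_freeGradedPart.2 fun l =>
    add_sub_assoc (a.degree : ℤ) j (w l) ▸ monomial_mul_mem_gradedPart (mem_freeGradedPart.1 hx l) a

theorem koszulHomotopy_mem_freeGradedPart [LinearOrder ι] {w : α → ℤ} {j : ℤ}
    {u : Finset ι → α →₀ MvPolynomial ι R} (hu : ∀ S, u S ∈ freeGradedPart ι R w (j - #S))
    (S : Finset ι) : koszulHomotopy ι R α u S ∈ freeGradedPart ι R w (j - #S) := by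
  induction S using Finset.induction_on_min with
  | empty => simp [koszulHomotopy_empty]
  | insert k S hk =>
    refine mem_freeGradedPart.2 fun l => ?_
    rw [koszulHomotopy_insert_apply hk, card_insert_of_notMem fun h => (hk k h).false,
      Nat.cast_add, Nat.cast_one, ← sub_sub, sub_right_comm]
    exact divHead_mem_gradedPart (mem_freeGradedPart.1 (hu S) l) k

end Grading

namespace MinimalFreeResolution

open MvPolynomial

variable {n : ℕ} {K : Type} [Field K] {M : Type} [AddCommGroup M]
  [Module (MvPolynomial (Fin n) K) M] [Module K M]

/-- `F` is a graded resolution of the module with homogeneous components `𝓜 j`, where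
`deg d i` is the degree of the `i`-th generator of `F_d`. -/
structure IsGraded (F : MinimalFreeResolution n K M) (deg : ∀ d, Fin (F.b d) → ℤ)
    (𝓜 : ℤ → Submodule K M) : Prop where
  φ_mem (d : ℕ) (i : Fin (F.b (d + 1))) :
    F.φ d (Finsupp.single i 1) ∈ freeGradedPart (Fin n) K (deg d) (deg (d + 1) i)
  ε_mem (i : Fin (F.b 0)) : F.ε (Finsupp.single i 1) ∈ 𝓜 (deg 0 i)
  monomial_smul_mem {j : ℤ} {x : M} (a : Fin n →₀ ℕ) (hx : x ∈ 𝓜 j) :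
    monomial a (1 : K) • x ∈ 𝓜 (a.degree + j)

variable {F : MinimalFreeResolution n K M} {deg : ∀ d, Fin (F.b d) → ℤ}
  {𝓜 : ℤ → Submodule K M}

theorem IsGraded.tail (hF : F.IsGraded deg 𝓜) :
    F.tail.IsGraded (fun d => deg (d + 1)) fun j =>
      (freeGradedPart (Fin n) K (deg 0) j).comap
        ((LinearMap.ker F.ε).subtype.restrictScalars K) where
  φ_mem d i := hF.φ_mem (d + 1) i
  ε_mem i := hF.φ_mem 0 i
  monomial_smul_mem a hx := monomial_smul_mem_freeGradedPart hx a

variable [IsScalarTower K (MvPolynomial (Fin n) K) M]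

theorem IsGraded.ε_mem_of_mem_freeGradedPart (hF : F.IsGraded deg 𝓜) {j : ℤ}
    {x : Fin (F.b 0) →₀ MvPolynomial (Fin n) K}
    (hx : x ∈ freeGradedPart (Fin n) K (deg 0) j) : F.ε x ∈ 𝓜 j := by
  rw [← x.sum_single, map_finsuppSum]
  refine sum_mem fun l _ => ?_
  beta_reduce
  rw [← mul_one (x l), ← smul_eq_mul, ← Finsupp.smul_single, map_smul,
    ← support_sum_monomial_coeff (x l), sum_smul]
  refine sum_mem fun m hm => ?_
  rw [← mul_one (coeff m (x l)), ← smul_eq_mul, ← smul_monomial, smul_assoc]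
  have hdeg : (m.degree : ℤ) + deg 0 l = j := by
    rw [mem_gradedPart.1 (mem_freeGradedPart.1 hx l) m (mem_support_iff.1 hm), sub_add_cancel]
  exact Submodule.smul_mem _ _ (hdeg ▸ hF.monomial_smul_mem m (hF.ε_mem l))

theorem IsGraded.bettiCycle_mem (hF : F.IsGraded deg 𝓜) (d : ℕ) (i : Fin (F.b d))
    (S : Finset (Fin n)) : F.bettiCycle d (Finsupp.single i 1) S ∈ 𝓜 (deg d i - #S) := by
  induction d generalizing M S with
  | zero =>
    rw [bettiCycle_zero, LinearMap.compLeft_apply, Function.comp_apply]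
    rcases eq_or_ne S ∅ with rfl | hS
    · simpa [constantChain] using hF.ε_mem i
    · rw [constantChain_of_ne_empty hS, map_zero]
      exact zero_mem _
  | succ d ih =>
    exact hF.ε_mem_of_mem_freeGradedPart
      (koszulHomotopy_mem_freeGradedPart (fun T => ih hF.tail i T) S)

end MinimalFreeResolution

section Multidegree

open MvPolynomial

variable {ι R : Type*} [CommRing R]

/-- The exponent vector of the squarefree monomial with support `S`. -/
noncomputable def sqfreeExponent (S : Finset ι) : ι →₀ ℕ :=
  Finsupp.indicator S fun _ _ => 1

theorem sqfreeExponent_apply [DecidableEq ι] (S : Finset ι) (i : ι) :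
    sqfreeExponent S i = if i ∈ S then 1 else 0 := by
  simp [sqfreeExponent, Finsupp.indicator_apply]

theorem support_sqfreeExponent (S : Finset ι) : (sqfreeExponent S).support = S := by
  classical
  ext i
  simp [sqfreeExponent_apply]

theorem degree_sqfreeExponent (S : Finset ι) : (sqfreeExponent S).degree = #S := by
  classical
  rw [Finsupp.degree_apply, support_sqfreeExponent, card_eq_sum_ones]
  exact sum_congr rfl fun i hi => by rw [sqfreeExponent_apply, if_pos hi]

theorem sqfreeExponent_singleton (i : ι) :
    sqfreeExponent {i} = Finsupp.single i 1 := by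
  classical
  ext j
  simp [sqfreeExponent_apply, Finsupp.single_apply, eq_comm]

theorem sqfreeExponent_insert [DecidableEq ι] {i : ι} {S : Finset ι} (hi : i ∉ S) :
    sqfreeExponent (insert i S) = Finsupp.single i 1 + sqfreeExponent S := by
  ext j
  rcases eq_or_ne i j with rfl | hij <;> simp [sqfreeExponent_apply, *, Ne.symm]

theorem X_mul_X_eq_monomial_sqfreeExponent [DecidableEq ι] {i j : ι} (hij : i ≠ j) :
    (X i * X j : MvPolynomial ι R) = monomial (sqfreeExponent {i, j}) 1 := by
  rw [X, X, monomial_mul, one_mul, sqfreeExponent_insert (by simpa), sqfreeExponent_singleton]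

theorem sqfreeExponent_le {S : Finset ι} {a : ι →₀ ℕ} :
    sqfreeExponent S ≤ a ↔ S ⊆ a.support := by
  classical
  refine forall_congr' fun i => ?_
  rw [sqfreeExponent_apply, Finsupp.mem_support_iff, ← Nat.one_le_iff_ne_zero]
  split_ifs with hi <;> simp [hi]

theorem sqfreeExponent_sub_sqfreeExponent [DecidableEq ι] (σ S : Finset ι) :
    sqfreeExponent σ - sqfreeExponent S = sqfreeExponent (σ \ S) := by
  ext i
  by_cases hS : i ∈ S <;> by_cases hσ : i ∈ σ <;> simp [sqfreeExponent_apply, hS, hσ]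

theorem support_sub_sqfreeExponent_insert [DecidableEq ι] {a : ι →₀ ℕ} {k : ι} (hk : 2 ≤ a k)
    {S : Finset ι} (hkS : k ∉ S) :
    (a - sqfreeExponent (insert k S)).support = (a - sqfreeExponent S).support := by
  ext i
  rcases eq_or_ne k i with rfl | hki
  · simp [sqfreeExponent_apply, hkS]
    omega
  · simp [sqfreeExponent_apply, Ne.symm hki]

theorem eq_sqfreeExponent_support {a : ι →₀ ℕ} (ha : ∀ k, a k < 2) :
    a = sqfreeExponent a.support := by
  classical
  ext i
  have := ha i
  rw [sqfreeExponent_apply]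
  split_ifs with hi <;> rw [Finsupp.mem_support_iff] at hi <;> omega

/-- The component of multidegree `a` of a Koszul chain, where the `i`-th exterior generator has
the multidegree of the variable `X i`. It is only meaningful at the subsets of the support
of `a`, because of the truncated subtraction. -/
noncomputable def multidegreePart (R : Type*) [CommRing R] (a : ι →₀ ℕ) :
    (Finset ι → MvPolynomial ι R) →ₗ[R] Finset ι → R :=
  LinearMap.pi fun S => lcoeff R (a - sqfreeExponent S) ∘ₗ LinearMap.proj S

theorem multidegreePart_apply (a : ι →₀ ℕ) (f : Finset ι → MvPolynomial ι R) (S : Finset ι) :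
    multidegreePart R a f S = coeff (a - sqfreeExponent S) (f S) := rfl

variable [DecidableEq ι]

/-- The Koszul chain of multidegree `a` with coefficients `c`. -/
noncomputable def multidegreeChain (R : Type*) [CommRing R] (a : ι →₀ ℕ) :
    (Finset ι → R) →ₗ[R] Finset ι → MvPolynomial ι R :=
  LinearMap.pi fun S =>
    if S ⊆ a.support then monomial (a - sqfreeExponent S) ∘ₗ LinearMap.proj S else 0

theorem multidegreeChain_apply (a : ι →₀ ℕ) (c : Finset ι → R) (S : Finset ι) :
    multidegreeChain R a c S =
      if S ⊆ a.support then monomial (a - sqfreeExponent S) (c S) else 0 := by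
  rw [multidegreeChain, LinearMap.pi_apply]
  split_ifs <;> rfl

theorem mem_of_forall_multidegreeChain_mem [Finite ι]
    {P : Submodule R (Finset ι → MvPolynomial ι R)} {f : Finset ι → MvPolynomial ι R}
    (h : ∀ a, multidegreeChain R a (multidegreePart R a f) ∈ P) : f ∈ P := by
  have := Fintype.ofFinite ι
  let A : Finset (ι →₀ ℕ) := univ.biUnion fun S => (f S).support.image (· + sqfreeExponent S)
  have hf : ∑ a ∈ A, multidegreeChain R a (multidegreePart R a f) = f := by
    ext S m
    rw [Finset.sum_apply, coeff_sum, sum_eq_single (m + sqfreeExponent S)]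
    · rw [multidegreeChain_apply, if_pos (sqfreeExponent_le.1 le_add_self), multidegreePart_apply,
        add_tsub_cancel_right, coeff_monomial, if_pos rfl]
    · intro a _ ha
      rw [multidegreeChain_apply]
      split_ifs with hS
      · rw [coeff_monomial, if_neg fun h => ha ?_]
        rw [← h, tsub_add_cancel_of_le (sqfreeExponent_le.2 hS)]
      · exact coeff_zero m
    · intro hA
      have hm : coeff m (f S) = 0 := by
        by_contra hm
        exact hA (mem_biUnion.2 ⟨S, mem_univ S, mem_image_of_mem _ (mem_support_iff.2 hm)⟩)
      rw [multidegreeChain_apply, if_pos (sqfreeExponent_le.1 le_add_self), multidegreePart_apply,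
        add_tsub_cancel_right, hm, monomial_zero, coeff_zero]
  exact hf ▸ sum_mem fun a _ => h a

end Multidegree

section SupportDifferential

open MvPolynomial

variable {ι R : Type*} [Fintype ι] [LinearOrder ι] [CommRing R]

/-- The part of the Koszul differential of the variables in a multidegree with support `σ`. In
terms of the complements `σ \ S`, this is the simplicial coboundary map of the simplex on `σ`. -/
noncomputable def supportDifferential (R : Type*) [CommRing R] (σ : Finset ι) :
    (Finset ι → R) →ₗ[R] Finset ι → R :=
  koszulDifferential ((σ : Set ι).indicator 1)

theorem supportDifferential_apply (σ : Finset ι) (c : Finset ι → R) (S : Finset ι) :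
    supportDifferential R σ c S = ∑ i ∈ σ \ S, koszulSign i S • c (insert i S) := by
  rw [supportDifferential, koszulDifferential_apply, sdiff_eq_inter_compl, inter_comm,
    ← filter_mem_eq_inter, sum_filter]
  refine sum_congr rfl fun i _ => ?_
  split_ifs with hi <;> simp [hi]

theorem multidegreePart_koszulDifferential (a : ι →₀ ℕ) (f : Finset ι → MvPolynomial ι R) :
    multidegreePart R a (koszulDifferential (X (R := R)) f) =
      supportDifferential R a.support (multidegreePart R a f) := by
  ext S
  rw [multidegreePart_apply, supportDifferential, koszulDifferential_apply,
    koszulDifferential_apply, coeff_sum]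
  refine sum_congr rfl fun i hi => ?_
  have hiS : i ∉ S := mem_compl.1 hi
  have hsupp : i ∈ (a - sqfreeExponent S).support ↔ i ∈ a.support := by
    simp [sqfreeExponent_apply, hiS]
  rw [Units.smul_def, Units.smul_def, ← lcoeff_apply (R := R), map_zsmul, lcoeff_apply,
    smul_eq_mul, coeff_X_mul', multidegreePart_apply, sqfreeExponent_insert hiS,
    tsub_add_eq_tsub_tsub_swap]
  simp only [hsupp]
  split_ifs with h <;> simp_all

theorem koszulDifferential_multidegreeChain (a : ι →₀ ℕ) (c : Finset ι → R) :
    koszulDifferential (X (R := R)) (multidegreeChain R a c) =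
      multidegreeChain R a (supportDifferential R a.support c) := by
  ext1 S
  rw [multidegreeChain_apply, koszulDifferential_apply]
  split_ifs with hS
  · rw [supportDifferential, koszulDifferential_apply, map_sum]
    refine sum_congr rfl fun i hi => ?_
    have hiS : i ∉ S := mem_compl.1 hi
    rw [multidegreeChain_apply, Units.smul_def, Units.smul_def, map_zsmul]
    by_cases hia : i ∈ a.support
    · have hle : Finsupp.single i 1 ≤ a - sqfreeExponent S := by
        rw [Finsupp.single_le_iff]
        simpa [sqfreeExponent_apply, hiS, Nat.one_le_iff_ne_zero] using hia
      rw [if_pos (insert_subset hia hS), sqfreeExponent_insert hiS, tsub_add_eq_tsub_tsub_swap,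
        smul_eq_mul, X, monomial_mul, add_tsub_cancel_of_le hle]
      simp_all
    · rw [if_neg fun h => hia (h (mem_insert_self i S))]
      simp_all
  · refine sum_eq_zero fun i _ => ?_
    rw [multidegreeChain_apply, if_neg fun h => hS ((subset_insert i S).trans h), smul_zero,
      smul_zero]

end SupportDifferential

section StanleyReisner

open MvPolynomial

variable {ι R : Type*} [CommRing R] {Δ : Set (Finset ι)} {I : Ideal (MvPolynomial ι R)}

/-- `I` is the Stanley–Reisner ideal of the simplicial complex `Δ`: it is spanned by the monomials
whose support is not a face. -/
def IsStanleyReisnerIdeal (Δ : Set (Finset ι)) (I : Ideal (MvPolynomial ι R)) : Prop :=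
  ∀ p, p ∈ I ↔ ∀ m : ι →₀ ℕ, m.support ∈ Δ → coeff m p = 0

theorem exists_sqfreeExponent_pair_le_iff [DecidableEq ι] {r : ι → ι → Prop} {m : ι →₀ ℕ} :
    (∃ s ∈ {a | ∃ i j, i ≠ j ∧ ¬ r i j ∧ sqfreeExponent {i, j} = a}, s ≤ m) ↔
      ¬ (m.support : Set ι).Pairwise r := by
  simp only [Set.mem_ofPred_eq, Set.Pairwise, mem_coe]
  push Not
  constructor
  · rintro ⟨_, ⟨i, j, hij, hr, rfl⟩, hle⟩
    obtain ⟨hi, hj⟩ := insert_subset_iff.1 (sqfreeExponent_le.1 hle)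
    exact ⟨i, hi, j, singleton_subset_iff.1 hj, hij, hr⟩
  · rintro ⟨i, hi, j, hj, hij, hr⟩
    exact ⟨_, ⟨i, j, hij, hr, rfl⟩,
      sqfreeExponent_le.2 (insert_subset hi (singleton_subset_iff.2 hj))⟩

theorem isStanleyReisnerIdeal_span_of_pairwise (r : ι → ι → Prop) :
    IsStanleyReisnerIdeal {T : Finset ι | (T : Set ι).Pairwise r}
      (Ideal.span {m : MvPolynomial ι R | ∃ i j, i ≠ j ∧ ¬ r i j ∧ m = X i * X j}) := by
  classical
  have hgen : {m : MvPolynomial ι R | ∃ i j, i ≠ j ∧ ¬ r i j ∧ m = X i * X j} =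
      (fun a => monomial a 1) '' {a | ∃ i j, i ≠ j ∧ ¬ r i j ∧ sqfreeExponent {i, j} = a} := by
    ext m
    constructor
    · rintro ⟨i, j, hij, hr, rfl⟩
      exact ⟨_, ⟨i, j, hij, hr, rfl⟩, (X_mul_X_eq_monomial_sqfreeExponent hij).symm⟩
    · rintro ⟨_, ⟨i, j, hij, hr, rfl⟩, rfl⟩
      exact ⟨i, j, hij, hr, (X_mul_X_eq_monomial_sqfreeExponent hij).symm⟩
  intro p
  rw [hgen, mem_ideal_span_monomial_image]
  refine forall_congr' fun m => ?_
  rw [mem_support_iff, exists_sqfreeExponent_pair_le_iff, not_imp_not, Set.mem_ofPred_eq]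

theorem multidegreePart_eq_zero (hI : IsStanleyReisnerIdeal Δ I)
    {f : Finset ι → MvPolynomial ι R} (hf : (Submodule.mkQ I).compLeft _ f = 0) {a : ι →₀ ℕ}
    {S : Finset ι} (hS : (a - sqfreeExponent S).support ∈ Δ) : multidegreePart R a f S = 0 :=
  (hI _).1 ((Submodule.Quotient.mk_eq_zero I).1 (congrFun hf S)) _ hS

variable [LinearOrder ι]

theorem mkQ_multidegreeChain_eq_zero (hI : IsStanleyReisnerIdeal Δ I) {a : ι →₀ ℕ}
    {c : Finset ι → R}
    (hc : ∀ S ⊆ a.support, (a - sqfreeExponent S).support ∈ Δ → c S = 0) :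
    (Submodule.mkQ I).compLeft _ (multidegreeChain R a c) = 0 := by
  ext1 S
  refine (Submodule.Quotient.mk_eq_zero I).2 ((hI _).2 fun m hm => ?_)
  rw [multidegreeChain_apply]
  split_ifs with hS
  · rw [coeff_monomial]
    split_ifs with h
    · exact hc S hS (h ▸ hm)
    · rfl
  · exact coeff_zero m

variable [Fintype ι]

theorem supportDifferential_multidegreePart_eq_zero (hI : IsStanleyReisnerIdeal Δ I)
    {f : Finset ι → MvPolynomial ι R}
    (hf : koszulDifferential (X (R := R)) ((Submodule.mkQ I).compLeft _ f) = 0) {a : ι →₀ ℕ}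
    {S : Finset ι} (hS : (a - sqfreeExponent S).support ∈ Δ) :
    supportDifferential R a.support (multidegreePart R a f) S = 0 := by
  rw [koszulDifferential_compLeft] at hf
  rw [← multidegreePart_koszulDifferential, multidegreePart_eq_zero hI hf hS]

theorem mkQ_multidegreeChain_mem_range (hI : IsStanleyReisnerIdeal Δ I) {a : ι →₀ ℕ}
    {b c : Finset ι → R} (hbc : ∀ S ⊆ a.support, (a - sqfreeExponent S).support ∈ Δ →
      supportDifferential R a.support b S = c S) :
    (Submodule.mkQ I).compLeft _ (multidegreeChain R a c) ∈
      LinearMap.range (koszulDifferential (X (R := R))) := by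
  refine ⟨(Submodule.mkQ I).compLeft _ (multidegreeChain R a b), ?_⟩
  rw [koszulDifferential_compLeft, koszulDifferential_multidegreeChain, ← sub_eq_zero, ← map_sub,
    ← map_sub]
  exact mkQ_multidegreeChain_eq_zero hI fun S hS hSΔ => sub_eq_zero.2 (hbc S hS hSΔ)

-- A variable of exponent at least two stays in the support when it is divided out once, so the
-- contraction in its direction survives the passage to the quotient.
theorem mkQ_multidegreeChain_mem_range_of_two_le (hI : IsStanleyReisnerIdeal Δ I) {a : ι →₀ ℕ}
    {k : ι} (hk : 2 ≤ a k) {c : Finset ι → R}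
    (hc : ∀ S, (a - sqfreeExponent S).support ∈ Δ → supportDifferential R a.support c S = 0) :
    (Submodule.mkQ I).compLeft _ (multidegreeChain R a c) ∈
      LinearMap.range (koszulDifferential (X (R := R))) := by
  refine mkQ_multidegreeChain_mem_range hI (b := koszulCone R k c) fun S _ hSΔ => ?_
  have hx : ((a.support : Set ι).indicator 1 k : R) = 1 :=
    Set.indicator_of_mem (Finsupp.mem_support_iff.2 (by omega)) 1
  have hcone : koszulCone R k (supportDifferential R a.support c) S = 0 := by
    by_cases hkS : k ∈ S
    · rw [← insert_erase hkS, koszulCone_insert (notMem_erase k S), hc, smul_zero]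
      rwa [← support_sub_sqfreeExponent_insert hk (notMem_erase k S), insert_erase hkS]
    · exact koszulCone_of_notMem hkS _
  have h := congrFun (koszulDifferential_koszulCone_add (A := R) ((a.support : Set ι).indicator 1)
    k c) S
  rwa [hx, one_smul, Pi.add_apply, ← supportDifferential, hcone, add_zero] at h

theorem mkQ_mem_range_koszulDifferential (hI : IsStanleyReisnerIdeal Δ I) {p : ℕ}
    {f : Finset ι → MvPolynomial ι R}
    (hfp : f ∈ koszulChains ι (MvPolynomial ι R) (MvPolynomial ι R) p)
    (hf : koszulDifferential (X (R := R)) ((Submodule.mkQ I).compLeft _ f) = 0)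
    (h : ∀ σ, ∃ b, ∀ S ⊆ σ, σ \ S ∈ Δ → #S = p →
      supportDifferential R σ b S = multidegreePart R (sqfreeExponent σ) f S) :
    (Submodule.mkQ I).compLeft _ f ∈ LinearMap.range (koszulDifferential (X (R := R))) := by
  suffices hP : f ∈ ((LinearMap.range (koszulDifferential (X (R := R)))).comap
      ((Submodule.mkQ I).compLeft (Finset ι))).restrictScalars R from hP
  refine mem_of_forall_multidegreeChain_mem fun a => ?_
  by_cases ha : ∃ k, 2 ≤ a k
  · obtain ⟨k, hk⟩ := ha
    exact mkQ_multidegreeChain_mem_range_of_two_le hI hk fun S =>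
      supportDifferential_multidegreePart_eq_zero hI hf
  · obtain ⟨σ, rfl⟩ : ∃ σ, sqfreeExponent σ = a :=
      ⟨_, (eq_sqfreeExponent_support fun k => not_le.1 fun hk => ha ⟨k, hk⟩).symm⟩
    obtain ⟨b, hb⟩ := h σ
    refine mkQ_multidegreeChain_mem_range hI
      (b := fun T => if #T = p + 1 then b T else 0) fun S hS hSΔ => ?_
    rw [support_sqfreeExponent] at hS ⊢
    rw [sqfreeExponent_sub_sqfreeExponent, support_sqfreeExponent] at hSΔ
    rw [supportDifferential, koszulDifferential_ite_card]
    split_ifs with hSp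
    · exact hb S hS hSΔ hSp
    · rw [multidegreePart_apply, hfp S hSp, coeff_zero]

end StanleyReisner

section Hochster

open MvPolynomial

variable {ι R : Type*} [LinearOrder ι] [CommRing R]

theorem multidegreePart_eq_zero_of_mem_gradedPart {j : ℤ} {f : Finset ι → MvPolynomial ι R}
    {S : Finset ι} (hf : f S ∈ gradedPart ι R (j - #S)) {σ : Finset ι} (hσ : #σ ≠ j)
    (hS : S ⊆ σ) : multidegreePart R (sqfreeExponent σ) f S = 0 := by
  by_contra h
  have hdeg := mem_gradedPart.1 hf _ h
  rw [sqfreeExponent_sub_sqfreeExponent, degree_sqfreeExponent, cast_card_sdiff hS] at hdeg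
  exact hσ (sub_left_inj.1 hdeg)

variable [Fintype ι] {Δ : Set (Finset ι)} {I : Ideal (MvPolynomial ι R)}

/-- The reduced cohomology with coefficients in `R` of the subcomplex of `Δ` induced on `σ`
vanishes in degree `#σ - p - 1`. A cochain is encoded by its values on the complements in `σ` of
the faces, which have cardinality `p`. -/
def IsAcyclicAt (R : Type*) [CommRing R] (Δ : Set (Finset ι)) (σ : Finset ι) (p : ℕ) : Prop :=
  ∀ c : Finset ι → R,
    (∀ S ⊆ σ, σ \ S ∈ Δ → #S + 1 = p → supportDifferential R σ c S = 0) →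
      ∃ b, ∀ S ⊆ σ, σ \ S ∈ Δ → #S = p → supportDifferential R σ b S = c S

theorem IsAcyclicAt.exists_eq_multidegreePart {σ : Finset ι} {p : ℕ} (hσ : IsAcyclicAt R Δ σ p)
    (hI : IsStanleyReisnerIdeal Δ I) {f : Finset ι → MvPolynomial ι R}
    (hf : koszulDifferential (X (R := R)) ((Submodule.mkQ I).compLeft _ f) = 0) :
    ∃ b, ∀ S ⊆ σ, σ \ S ∈ Δ → #S = p →
      supportDifferential R σ b S = multidegreePart R (sqfreeExponent σ) f S := by
  refine hσ _ fun S _ hSΔ _ => ?_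
  rw [← support_sqfreeExponent (σ \ S), ← sqfreeExponent_sub_sqfreeExponent] at hSΔ
  simpa only [support_sqfreeExponent] using supportDifferential_multidegreePart_eq_zero hI hf hSΔ

theorem mem_range_koszulDifferential_of_isAcyclicAt (hI : IsStanleyReisnerIdeal Δ I)
    {p : ℕ} {j : ℤ} {z : Finset ι → MvPolynomial ι R ⧸ I}
    (hz : z ∈ koszulCycles (X (R := R)) (MvPolynomial ι R ⧸ I) p)
    (hzj : ∀ S, z S ∈ (gradedPart ι R (j - #S)).map ((Submodule.mkQ I).restrictScalars R))
    (hσ : ∀ σ : Finset ι, #σ = j → IsAcyclicAt R Δ σ p) :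
    z ∈ LinearMap.range (koszulDifferential (X (R := R))) := by
  have hlift (S : Finset ι) :
      ∃ q ∈ gradedPart ι R (j - #S), (#S ≠ p → q = 0) ∧ Submodule.mkQ I q = z S := by
    by_cases hS : #S = p
    · obtain ⟨q, hq, hqz⟩ := hzj S
      exact ⟨q, hq, (absurd hS ·), hqz⟩
    · exact ⟨0, zero_mem _, fun _ => rfl, (hz.2 S hS).symm ▸ map_zero _⟩
  choose f hfj hfp hfz using hlift
  obtain rfl : (Submodule.mkQ I).compLeft _ f = z := funext hfz
  refine mkQ_mem_range_koszulDifferential hI hfp hz.1 fun σ => ?_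
  by_cases hσj : #σ = j
  · exact (hσ σ hσj).exists_eq_multidegreePart hI hz.1
  · refine ⟨0, fun S hS _ _ => ?_⟩
    rw [map_zero, multidegreePart_eq_zero_of_mem_gradedPart (hfj S) hσj hS, Pi.zero_apply]

end Hochster

theorem MinimalFreeResolution.IsGraded.exists_not_isAcyclicAt {n : ℕ} {K : Type} [Field K]
    {Δ : Set (Finset (Fin n))} {I : Ideal (MvPolynomial (Fin n) K)}
    (hI : IsStanleyReisnerIdeal Δ I)
    {F : MinimalFreeResolution n K (MvPolynomial (Fin n) K ⧸ I)} {deg : ∀ d, Fin (F.b d) → ℤ}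
    (hF : F.IsGraded deg fun j =>
      (gradedPart (Fin n) K j).map ((Submodule.mkQ I).restrictScalars K))
    (d : ℕ) (i : Fin (F.b d)) : ∃ σ : Finset (Fin n), #σ = deg d i ∧ ¬ IsAcyclicAt K Δ σ d := by
  by_contra! h
  have hzero := F.eq_zero_of_bettiCycle_mem_range <|
    mem_range_koszulDifferential_of_isAcyclicAt hI (F.bettiCycle_mem_koszulCycles d _)
      (hF.bettiCycle_mem d i) h
  exact one_ne_zero (Finsupp.single_eq_zero.1 hzero)

section LowDegree

variable {ι R : Type*} [LinearOrder ι] [CommRing R] {Δ : Set (Finset ι)} {σ : Finset ι} {p : ℕ}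

/-- The value at the vertex `v` of the simplicial `0`-cochain encoded by `c`. -/
def vertexValue (σ : Finset ι) (c : Finset ι → R) (v : ι) : R :=
  koszulSign v (σ.erase v) • c (σ.erase v)

/-- The value at the edge from `v` to `w` of the simplicial `1`-cochain encoded by `c`. -/
def edgeValue (σ : Finset ι) (v w : ι) : (Finset ι → R) →ₗ[R] R :=
  (koszulSign v ((σ.erase w).erase v) * koszulSign w (σ.erase w)) •
    LinearMap.proj ((σ.erase w).erase v)

/-- The encoding of the simplicial `0`-cochain with values `V`. -/
def vertexCochain (σ : Finset ι) (V : ι → R) (S : Finset ι) : R :=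
  ∑ v ∈ σ \ S, koszulSign v S • V v

theorem edgeValue_apply (σ : Finset ι) (v w : ι) (c : Finset ι → R) :
    edgeValue σ v w c =
      (koszulSign v ((σ.erase w).erase v) * koszulSign w (σ.erase w)) •
        c ((σ.erase w).erase v) := rfl

theorem vertexValue_vertexCochain (V : ι → R) {v : ι} (hv : v ∈ σ) :
    vertexValue σ (vertexCochain σ V) v = V v := by
  rw [vertexValue, vertexCochain, sdiff_erase_self hv, sum_singleton, smul_smul,
    Int.units_mul_self, one_smul]

theorem sdiff_erase_erase {v w : ι} (hv : v ∈ σ) (hw : w ∈ σ) :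
    σ \ (σ.erase w).erase v = {v, w} := by
  rw [sdiff_erase hv, sdiff_erase_self hw]

theorem card_erase_erase_add_two {v w : ι} (hv : v ∈ σ) (hw : w ∈ σ) (hvw : v ≠ w) :
    #((σ.erase w).erase v) + 2 = #σ := by
  rw [← card_erase_add_one hw, ← card_erase_add_one (mem_erase.2 ⟨hvw, hv⟩)]

theorem exists_eq_erase_of_card_add_one_eq {S : Finset ι} (hS : S ⊆ σ) (h : #S + 1 = #σ) :
    ∃ v ∈ σ, S = σ.erase v := by
  obtain ⟨v, hv⟩ := card_eq_one.1 (show #(σ \ S) = 1 by rw [card_sdiff_of_subset hS]; omega)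
  have hvσ : v ∈ σ := sdiff_subset (hv ▸ mem_singleton_self v)
  exact ⟨v, hvσ, by rw [← sdiff_singleton_eq_erase, ← hv, Finset.sdiff_sdiff_eq_self hS]⟩

variable [Fintype ι]

theorem vertexValue_supportDifferential (b : Finset ι → R) {v : ι} (hv : v ∈ σ) :
    vertexValue σ (supportDifferential R σ b) v = b σ := by
  rw [vertexValue, supportDifferential_apply, sdiff_erase_self hv, sum_singleton, insert_erase hv,
    smul_smul, Int.units_mul_self, one_smul]

theorem edgeValue_supportDifferential (c : Finset ι → R) {v w : ι} (hv : v ∈ σ) (hw : w ∈ σ)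
    (hvw : v ≠ w) :
    edgeValue σ v w (supportDifferential R σ c) = vertexValue σ c w - vertexValue σ c v := by
  have hinsert_v : insert v ((σ.erase w).erase v) = σ.erase w :=
    insert_erase (mem_erase.2 ⟨hvw, hv⟩)
  have hinsert_w : insert w ((σ.erase w).erase v) = σ.erase v := by
    rw [erase_right_comm, insert_erase (mem_erase.2 ⟨hvw.symm, hw⟩)]
  have hsign := koszulSign_mul_koszulSign_insert (S := (σ.erase w).erase v) hvw (by simp) (by simp)
  rw [hinsert_v, hinsert_w] at hsign
  rw [edgeValue_apply, supportDifferential_apply, sdiff_erase_erase hv hw, sum_pair hvw,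
    hinsert_v, hinsert_w, smul_add, vertexValue, vertexValue, smul_smul, smul_smul, mul_right_comm,
    Int.units_mul_self, one_mul, hsign, neg_mul, mul_right_comm, Int.units_mul_self, one_mul,
    Units.neg_smul, sub_eq_add_neg]

theorem supportDifferential_vertexCochain {V : ι → R} {c : Finset ι → R} {v w : ι} (hv : v ∈ σ)
    (hw : w ∈ σ) (hvw : v ≠ w) (hV : V w - V v = edgeValue σ v w c) :
    supportDifferential R σ (vertexCochain σ V) ((σ.erase w).erase v) =
      c ((σ.erase w).erase v) := by
  rw [← vertexValue_vertexCochain V hv, ← vertexValue_vertexCochain V hw,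
    ← edgeValue_supportDifferential _ hv hw hvw] at hV
  exact smul_left_cancel (_ : ℤˣ) hV

theorem isAcyclicAt_of_forall_card_ne (h : ∀ S ⊆ σ, σ \ S ∈ Δ → #S ≠ p) :
    IsAcyclicAt R Δ σ p :=
  fun _ _ => ⟨0, fun S hS hSΔ hSp => absurd hSp (h S hS hSΔ)⟩

theorem isAcyclicAt_card {v : ι} (hv : v ∈ σ) (hvΔ : {v} ∈ Δ) : IsAcyclicAt R Δ σ #σ := by
  refine fun c hc => ⟨0, fun S hS _ hSσ => ?_⟩
  obtain rfl := eq_of_subset_of_card_le hS hSσ.ge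
  rw [map_zero, Pi.zero_apply, ← vertexValue_supportDifferential c hv, vertexValue,
    hc _ (erase_subset v S) (by rwa [sdiff_erase_self hv]) (card_erase_add_one hv), smul_zero]

theorem isAcyclicAt_of_forall_exists_forall_eq (hp : p + 1 = #σ)
    (h : ∀ V : ι → R, (∀ v ∈ σ, ∀ w ∈ σ, v ≠ w → {v, w} ∈ Δ → V w = V v) →
      ∃ r, ∀ v ∈ σ, V v = r) : IsAcyclicAt R Δ σ p := by
  intro c hc
  obtain ⟨r, hr⟩ := h (vertexValue σ c) fun v hv w hw hvw hΔ => by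
    have hcard := card_erase_erase_add_two hv hw hvw
    rw [← sub_eq_zero, ← edgeValue_supportDifferential c hv hw hvw, edgeValue_apply,
      hc _ ((erase_subset v _).trans (erase_subset w σ)) (by rwa [sdiff_erase_erase hv hw])
        (by omega), smul_zero]
  refine ⟨fun _ => r, fun S hS _ hSp => ?_⟩
  obtain ⟨v, hv, rfl⟩ := exists_eq_erase_of_card_add_one_eq hS (hSp ▸ hp)
  refine MulAction.injective (koszulSign v (σ.erase v)) ?_
  exact (vertexValue_supportDifferential _ hv).trans (hr v hv).symm

end LowDegree

section Cycle

variable {n : ℕ}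

theorem cyclic_induction [NeZero n] {P : Fin n → Prop} {a : Fin n} (zero : P (a + 1))
    (succ : ∀ v ≠ a, P v → P (v + 1)) (v : Fin n) : P v := by
  obtain ⟨k, rfl⟩ := Nat.exists_eq_succ_of_ne_zero (NeZero.ne n)
  rw [← sub_add_cancel v (a + 1)]
  induction v - (a + 1) using Fin.induction with
  | zero => rwa [zero_add]
  | succ i ih =>
    rw [← Fin.coeSucc_eq_succ, add_right_comm]
    refine succ _ (fun h => (Fin.castSucc_lt_last i).ne ?_) ih
    rw [add_comm a, ← add_assoc, add_eq_right] at h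
    exact add_right_cancel (h.trans (Fin.last_add_one k).symm)

theorem exists_cyclic_primitive_of_sum_eq_zero {G : Type*} [AddCommGroup G] [NeZero n]
    {E : Fin n → G} (hE : ∑ v, E v = 0) : ∃ V : Fin n → G, ∀ v, V (v + 1) - V v = E v := by
  obtain ⟨k, rfl⟩ := Nat.exists_eq_succ_of_ne_zero (NeZero.ne n)
  have hlast : Fin.partialSum E (Fin.last (k + 1)) = 0 := by
    rw [← hE, Fin.partialSum, Fin.val_last, List.take_of_length_le (List.length_ofFn.le),
      List.sum_ofFn]
  refine ⟨fun v => Fin.partialSum E v.castSucc, fun v => ?_⟩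
  rw [sub_eq_iff_eq_add', ← Fin.partialSum_succ]
  beta_reduce
  rcases Fin.eq_castSucc_or_eq_last v with ⟨i, rfl⟩ | rfl
  · rw [Fin.coeSucc_eq_succ, Fin.succ_castSucc]
  · rw [Fin.last_add_one, Fin.castSucc_zero, Fin.partialSum_zero, Fin.succ_last, hlast]

theorem exists_cyclic_primitive {G : Type*} [AddCommGroup G] [NeZero n] (E : Fin n → G)
    (a : Fin n) : ∃ V : Fin n → G, ∀ v ≠ a, V (v + 1) - V v = E v := by
  have hsum : ∑ v, (E v - Pi.single (M := fun _ => G) a (∑ w, E w) v) = 0 := by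
    simp
  obtain ⟨V, hV⟩ := exists_cyclic_primitive_of_sum_eq_zero hsum
  exact ⟨V, fun v hv => by rw [hV, Pi.single_eq_of_ne hv, sub_zero]⟩

theorem cycAdj_iff_val {i j : Fin n} :
    cycAdj n i j ↔ ((i : ℕ) + 1 = j ∨ (i : ℕ) + 1 = n ∧ (j : ℕ) = 0) ∨
      ((j : ℕ) + 1 = i ∨ (j : ℕ) + 1 = n ∧ (i : ℕ) = 0) := by
  have hmod (k : ℕ) (hk : k < n) : (k + 1) % n = if k + 1 = n then 0 else k + 1 := by
    split_ifs with h
    · rw [h, Nat.mod_self]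
    · exact Nat.mod_eq_of_lt (by omega)
  rw [cycAdj, hmod i i.2, hmod j j.2]
  split_ifs <;> omega

theorem cycAdj_iff [NeZero n] {i j : Fin n} : cycAdj n i j ↔ j = i + 1 ∨ i = j + 1 := by
  simp [cycAdj, Fin.ext_iff, Fin.val_add, eq_comm]

/-- The faces of the `n`-cycle, as a simplicial complex: the sets of pairwise adjacent vertices. -/
def cycleFaces (n : ℕ) : Set (Finset (Fin n)) :=
  {T | (T : Set (Fin n)).Pairwise (cycAdj n)}

theorem singleton_mem_cycleFaces (v : Fin n) : {v} ∈ cycleFaces n := by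
  simp [cycleFaces]

theorem pair_mem_cycleFaces [NeZero n] (v : Fin n) : {v, v + 1} ∈ cycleFaces n := by
  have hadj : cycAdj n v (v + 1) := cycAdj_iff.2 (Or.inl rfl)
  have hadj' : cycAdj n (v + 1) v := cycAdj_iff.2 (Or.inr rfl)
  simp [cycleFaces, Set.pairwise_insert, hadj, hadj']

theorem card_le_two_of_mem_cycleFaces (hn : 4 ≤ n) {T : Finset (Fin n)} (hT : T ∈ cycleFaces n) :
    #T ≤ 2 := by
  by_contra! h
  obtain ⟨a, b, c, ha, hb, hc, hab, hac, hbc⟩ := two_lt_card_iff.1 h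
  have hab' := cycAdj_iff_val.1 (hT ha hb hab)
  have hac' := cycAdj_iff_val.1 (hT ha hc hac)
  have hbc' := cycAdj_iff_val.1 (hT hb hc hbc)
  rw [Ne, Fin.ext_iff] at hab hac hbc
  omega

theorem exists_eq_pair_of_mem_cycleFaces [NeZero n] {T : Finset (Fin n)} (hT : T ∈ cycleFaces n)
    (hcard : #T = 2) : ∃ v, v ≠ v + 1 ∧ T = {v, v + 1} := by
  obtain ⟨v, w, hvw, rfl⟩ := card_eq_two.1 hcard
  rcases cycAdj_iff.1 (hT (by simp) (by simp) hvw) with rfl | rfl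
  · exact ⟨v, hvw, rfl⟩
  · exact ⟨w, hvw.symm, pair_comm _ _⟩

theorem isStanleyReisnerIdeal_cycleIdeal (n : ℕ) (K : Type) [Field K] :
    IsStanleyReisnerIdeal (cycleFaces n) (cycleIdeal n K) :=
  isStanleyReisnerIdeal_span_of_pairwise (cycAdj n)

end Cycle

section CycleHomology

open MvPolynomial

variable {n : ℕ} [NeZero n] {R : Type*} [CommRing R] {σ : Finset (Fin n)} {p : ℕ}

theorem exists_eq_erase_erase_of_sdiff_mem_cycleFaces {S : Finset (Fin n)} (hS : S ⊆ σ)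
    (hface : σ \ S ∈ cycleFaces n) (hcard : #S + 2 = #σ) :
    ∃ v, v ≠ v + 1 ∧ v ∈ σ ∧ v + 1 ∈ σ ∧ S = (σ.erase (v + 1)).erase v := by
  obtain ⟨v, hv, hpair⟩ := exists_eq_pair_of_mem_cycleFaces hface
    (by rw [card_sdiff_of_subset hS]; omega)
  have hsub : {v, v + 1} ⊆ σ := hpair ▸ sdiff_subset
  obtain ⟨hvσ, hvσ'⟩ := insert_subset_iff.1 hsub
  rw [singleton_subset_iff] at hvσ'
  refine ⟨v, hv, hvσ, hvσ', ?_⟩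
  rw [← Finset.sdiff_sdiff_eq_self hS, hpair, ← sdiff_erase_erase hvσ hvσ',
    Finset.sdiff_sdiff_eq_self ((erase_subset _ _).trans (erase_subset _ _))]

theorem exists_supportDifferential_eq_of_primitive {c : Finset (Fin n) → R} {V : Fin n → R}
    (hV : ∀ v ∈ σ, v + 1 ∈ σ → V (v + 1) - V v = edgeValue σ v (v + 1) c) (hp : p + 2 = #σ) :
    ∃ b, ∀ S ⊆ σ, σ \ S ∈ cycleFaces n → #S = p → supportDifferential R σ b S = c S := by
  refine ⟨vertexCochain σ V, fun S hS hface hSp => ?_⟩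
  obtain ⟨v, hv, hvσ, hvσ', rfl⟩ :=
    exists_eq_erase_erase_of_sdiff_mem_cycleFaces hS hface (hSp ▸ hp)
  exact supportDifferential_vertexCochain hvσ hvσ' hv (hV v hvσ hvσ')

theorem isAcyclicAt_cycleFaces_of_add_one_eq_card {a : Fin n} (hσ : ∀ v ≠ a, v ∈ σ)
    (hp : p + 1 = #σ) : IsAcyclicAt R (cycleFaces n) σ p := by
  refine isAcyclicAt_of_forall_exists_forall_eq hp fun V hV => ⟨V (a + 1), ?_⟩
  refine cyclic_induction (a := a) (fun _ => rfl) fun v hva ih hv' => ?_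
  have hv := hσ v hva
  rcases eq_or_ne v (v + 1) with heq | hne
  · rw [← heq, ih hv]
  · rw [hV v hv _ hv' hne (pair_mem_cycleFaces v), ih hv]

theorem isAcyclicAt_cycleFaces_of_add_two_eq_card {a : Fin n} (ha : a ∉ σ) (hp : p + 2 = #σ) :
    IsAcyclicAt R (cycleFaces n) σ p := by
  intro c _
  obtain ⟨V, hV⟩ := exists_cyclic_primitive (fun v => edgeValue σ v (v + 1) c) a
  exact exists_supportDifferential_eq_of_primitive
    (fun v hv _ => hV v (ne_of_mem_of_not_mem hv ha)) hp

theorem isAcyclicAt_cycleFaces (hn : 4 ≤ n)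
    (h : ¬ ((p = 0 ∧ #σ = 0) ∨ (p = n - 2 ∧ #σ = n) ∨ (1 ≤ p ∧ p ≤ n - 3 ∧ #σ = p + 1))) :
    IsAcyclicAt R (cycleFaces n) σ p := by
  have hcardσ : #σ ≤ n := σ.card_le_univ.trans_eq (Fintype.card_fin n)
  have hcompl := σ.card_add_card_compl.trans (Fintype.card_fin n)
  by_cases htop : p = #σ
  · obtain ⟨v, hv⟩ : σ.Nonempty := card_pos.1 (by omega)
    exact htop ▸ isAcyclicAt_card hv (singleton_mem_cycleFaces v)
  by_cases hzero : p + 1 = #σ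
  · by_cases hp : p = 0
    · obtain ⟨v, rfl⟩ := card_eq_one.1 (hp ▸ hzero).symm
      exact isAcyclicAt_of_forall_exists_forall_eq hzero fun V _ =>
        ⟨V v, fun w hw => by rw [mem_singleton.1 hw]⟩
    · obtain ⟨a, ha⟩ : ∃ a, σᶜ ⊆ {a} := card_le_one_iff_subset_singleton.1 (by omega)
      refine isAcyclicAt_cycleFaces_of_add_one_eq_card (a := a) (fun v hv => ?_) hzero
      by_contra hvσ
      exact hv (mem_singleton.1 (ha (mem_compl.2 hvσ)))
  by_cases hone : p + 2 = #σ
  · obtain ⟨a, ha⟩ : σᶜ.Nonempty := card_pos.1 (by omega)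
    exact isAcyclicAt_cycleFaces_of_add_two_eq_card (mem_compl.1 ha) hone
  refine isAcyclicAt_of_forall_card_ne fun S hS hface hSp => ?_
  have hface2 := card_le_two_of_mem_cycleFaces hn hface
  have hle := card_le_card hS
  rw [card_sdiff_of_subset hS] at hface2
  omega

/-- The evaluation on the fundamental class of the cycle of the simplicial `1`-cochain encoded
by `c`. -/
def windingNumber (n : ℕ) [NeZero n] (R : Type*) [CommRing R] : (Finset (Fin n) → R) →ₗ[R] R :=
  ∑ v, edgeValue univ v (v + 1)

theorem windingNumber_apply (c : Finset (Fin n) → R) :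
    windingNumber n R c = ∑ v, edgeValue univ v (v + 1) c := by
  simp [windingNumber]

theorem windingNumber_eq_zero {c : Finset (Fin n) → R}
    (hc : ∀ S, univ \ S ∈ cycleFaces n → c S = 0) : windingNumber n R c = 0 := by
  rw [windingNumber_apply]
  refine sum_eq_zero fun v _ => ?_
  rw [edgeValue_apply, hc, smul_zero]
  rw [sdiff_erase_erase (mem_univ _) (mem_univ _)]
  exact pair_mem_cycleFaces v

theorem ne_add_one (hn : 2 ≤ n) (v : Fin n) : v ≠ v + 1 := by
  simp [Fin.ext_iff, Nat.mod_eq_of_lt hn]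

theorem windingNumber_supportDifferential (hn : 2 ≤ n) (b : Finset (Fin n) → R) :
    windingNumber n R (supportDifferential R univ b) = 0 := by
  have hedge (v : Fin n) :=
    edgeValue_supportDifferential b (mem_univ v) (mem_univ (v + 1)) (ne_add_one hn v)
  simp only [windingNumber_apply, hedge]
  rw [sum_sub_distrib, sub_eq_zero]
  exact Equiv.sum_comp (Equiv.addRight (1 : Fin n)) (vertexValue univ b)

theorem exists_supportDifferential_eq_of_windingNumber_eq_zero {c : Finset (Fin n) → R}
    (hc : windingNumber n R c = 0) (hp : p + 2 = n) :
    ∃ b, ∀ S ⊆ univ, univ \ S ∈ cycleFaces n → #S = p → supportDifferential R univ b S = c S := by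
  obtain ⟨V, hV⟩ := exists_cyclic_primitive_of_sum_eq_zero ((windingNumber_apply c).symm.trans hc)
  exact exists_supportDifferential_eq_of_primitive (fun v _ _ => hV v) (by simpa)

theorem pair_add_one_injective (hn : 3 ≤ n) :
    Function.Injective fun v : Fin n => ({v, v + 1} : Finset (Fin n)) := by
  intro v w (h : ({v, v + 1} : Finset (Fin n)) = {w, w + 1})
  have hv : v ∈ ({w, w + 1} : Finset (Fin n)) := h ▸ mem_insert_self v _
  have hv' : v + 1 ∈ ({w, w + 1} : Finset (Fin n)) := h ▸ mem_insert_of_mem (mem_singleton_self _)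
  refine (mem_insert.1 hv).resolve_right fun hvw => ?_
  rw [mem_singleton.1 hvw] at hv'
  simp [add_assoc, Fin.ext_iff (a := 1 + 1), Fin.val_add, Nat.mod_eq_of_lt hn,
    Nat.mod_eq_of_lt (show 1 < n by omega)] at hv'

theorem windingNumber_single (hn : 3 ≤ n) (v : Fin n) (r : R) :
    windingNumber n R (Pi.single ((univ.erase (v + 1)).erase v) r) =
      edgeValue univ v (v + 1) (Pi.single ((univ.erase (v + 1)).erase v) r) := by
  rw [windingNumber_apply]
  refine sum_eq_single v (fun w _ hw => ?_) (fun h => absurd (mem_univ _) h)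
  rw [edgeValue_apply, Pi.single_eq_of_ne, smul_zero]
  refine fun h => hw (pair_add_one_injective hn ?_)
  beta_reduce
  rw [← sdiff_erase_erase (mem_univ w) (mem_univ _), h,
    sdiff_erase_erase (mem_univ _) (mem_univ _)]

theorem exists_windingNumber_eq_one (hn : 3 ≤ n) (hp : p + 2 = n) :
    ∃ c ∈ koszulChains (Fin n) R R p, windingNumber n R c = 1 := by
  let v : Fin n := 0
  have hcard : #((univ.erase (v + 1)).erase v) + 2 = n :=
    (card_erase_erase_add_two (mem_univ _) (mem_univ _) (ne_add_one (by omega) v)).trans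
      (card_fin n)
  refine ⟨Pi.single ((univ.erase (v + 1)).erase v)
    ((koszulSign v ((univ.erase (v + 1)).erase v) * koszulSign (v + 1) (univ.erase (v + 1))) • 1),
    fun T hT => Pi.single_eq_of_ne (by rintro rfl; omega) _, ?_⟩
  rw [windingNumber_single hn, edgeValue_apply, Pi.single_eq_same, smul_smul, Int.units_mul_self,
    one_smul]

variable {I : Ideal (MvPolynomial (Fin n) R)}

theorem windingNumber_multidegreePart_eq_zero (hn : 2 ≤ n)
    (hI : IsStanleyReisnerIdeal (cycleFaces n) I) {f : Finset (Fin n) → MvPolynomial (Fin n) R}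
    (hf : (Submodule.mkQ I).compLeft _ f ∈ LinearMap.range (koszulDifferential (X (R := R)))) :
    windingNumber n R (multidegreePart R (sqfreeExponent univ) f) = 0 := by
  obtain ⟨g, hg⟩ := hf
  obtain ⟨h, rfl⟩ := (Submodule.mkQ_surjective I).comp_left g
  have hsub : (Submodule.mkQ I).compLeft _ (f - koszulDifferential (X (R := R)) h) = 0 := by
    rw [map_sub, ← koszulDifferential_compLeft, sub_eq_zero]
    exact hg.symm
  have hpart : windingNumber n R (multidegreePart R (sqfreeExponent univ)
      (f - koszulDifferential (X (R := R)) h)) = 0 := by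
    refine windingNumber_eq_zero fun S hS => multidegreePart_eq_zero hI hsub ?_
    rwa [sqfreeExponent_sub_sqfreeExponent, support_sqfreeExponent]
  rwa [map_sub, map_sub, multidegreePart_koszulDifferential, support_sqfreeExponent,
    windingNumber_supportDifferential hn, sub_zero] at hpart

theorem mkQ_mem_range_of_windingNumber_eq_zero (hn : 4 ≤ n)
    (hI : IsStanleyReisnerIdeal (cycleFaces n) I) {f : Finset (Fin n) → MvPolynomial (Fin n) R}
    (hfp : f ∈ koszulChains (Fin n) (MvPolynomial (Fin n) R) (MvPolynomial (Fin n) R) (n - 2))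
    (hf : koszulDifferential (X (R := R)) ((Submodule.mkQ I).compLeft _ f) = 0)
    (hw : windingNumber n R (multidegreePart R (sqfreeExponent univ) f) = 0) :
    (Submodule.mkQ I).compLeft _ f ∈ LinearMap.range (koszulDifferential (X (R := R))) := by
  refine mkQ_mem_range_koszulDifferential hI hfp hf fun σ => ?_
  rcases eq_or_ne σ univ with rfl | hσ
  · exact exists_supportDifferential_eq_of_windingNumber_eq_zero hw (by omega)
  · have hcard : #σ ≠ n := by simpa [← card_eq_iff_eq_univ] using hσ
    exact (isAcyclicAt_cycleFaces hn (by omega)).exists_eq_multidegreePart hI hf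

theorem exists_cycle_windingNumber_eq_one (hn : 4 ≤ n)
    (hI : IsStanleyReisnerIdeal (cycleFaces n) I) :
    ∃ f ∈ koszulChains (Fin n) (MvPolynomial (Fin n) R) (MvPolynomial (Fin n) R) (n - 2),
      koszulDifferential (X (R := R)) ((Submodule.mkQ I).compLeft _ f) = 0 ∧
        windingNumber n R (multidegreePart R (sqfreeExponent univ) f) = 1 := by
  obtain ⟨c, hc, hw⟩ :=
    exists_windingNumber_eq_one (n := n) (R := R) (p := n - 3 + 1) (by omega) (by omega)
  rw [show n - 2 = n - 3 + 1 by omega]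
  refine ⟨multidegreeChain R (sqfreeExponent univ) c, fun S hS => ?chain, ?cycle, ?winding⟩
  case chain =>
    rw [multidegreeChain_apply, hc S hS, monomial_zero, ite_self]
  case cycle =>
    rw [koszulDifferential_compLeft, koszulDifferential_multidegreeChain]
    refine mkQ_multidegreeChain_eq_zero hI fun S _ hface =>
      koszulDifferential_mem_koszulChains _ hc S fun hS => ?_
    rw [sqfreeExponent_sub_sqfreeExponent, support_sqfreeExponent] at hface
    have hface2 := card_le_two_of_mem_cycleFaces hn hface
    rw [card_sdiff_of_subset (subset_univ S), card_fin] at hface2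
    omega
  case winding =>
    have hpart : multidegreePart R (sqfreeExponent univ)
        (multidegreeChain R (sqfreeExponent univ) c) = c := by
      ext S
      simp [multidegreePart_apply, multidegreeChain_apply, support_sqfreeExponent]
    rw [hpart, hw]

theorem finrank_koszulHomology_cycle {K : Type*} [Field K] {I : Ideal (MvPolynomial (Fin n) K)}
    (hn : 4 ≤ n) (hI : IsStanleyReisnerIdeal (cycleFaces n) I) :
    Module.finrank K
      (koszulHomology (X (R := K) (σ := Fin n)) (MvPolynomial (Fin n) K ⧸ I) (n - 2)) = 1 := by
  obtain ⟨f, hfp, hf, hw⟩ := exists_cycle_windingNumber_eq_one hn hI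
  rw [finrank_eq_one_iff_of_nonzero' (Submodule.Quotient.mk ⟨_, hf, compLeft_mem_koszulChains hfp⟩)]
  · intro x
    obtain ⟨⟨u, hu, hup⟩, rfl⟩ := Submodule.Quotient.mk_surjective _ x
    obtain ⟨g, hgp, rfl⟩ := exists_compLeft_eq_of_mem_koszulChains (Submodule.mkQ_surjective I) hup
    let w := windingNumber n K (multidegreePart K (sqfreeExponent univ) g)
    have hwg : windingNumber n K (multidegreePart K (sqfreeExponent univ) (w • f - g)) = 0 := by
      rw [map_sub, map_sub, map_smul, map_smul, hw, smul_eq_mul, mul_one, sub_self]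
    have hcycle :
        koszulDifferential (X (R := K)) ((Submodule.mkQ I).compLeft _ (w • f - g)) = 0 := by
      rw [map_sub, map_sub, LinearMap.mem_ker.1 hu, sub_zero, LinearMap.map_smul_of_tower,
        LinearMap.map_smul_of_tower, hf, smul_zero]
    exact ⟨w, koszulHomology_mk_eq_mk.2 <| mkQ_mem_range_of_windingNumber_eq_zero hn hI
      (sub_mem (Submodule.smul_of_tower_mem _ w hfp) hgp) hcycle hwg⟩
  · rw [Ne, koszulHomology_mk_eq_zero]
    intro hrange
    exact one_ne_zero (hw.symm.trans (windingNumber_multidegreePart_eq_zero (by omega) hI hrange))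

end CycleHomology

section Betti

open MvPolynomial

variable {n : ℕ} {K : Type} [Field K]

theorem mem_gradedPart_of_mem_homogeneousSubmodule {ι R : Type*} [CommRing R] {k : ℕ} {j : ℤ}
    {p : MvPolynomial ι R} (hp : p ∈ homogeneousSubmodule ι R k) (hk : (k : ℤ) = j) :
    p ∈ gradedPart ι R j :=
  mem_gradedPart.2 fun m hm => by
    rw [← hk, ← ((mem_homogeneousSubmodule k p).1 hp) hm, Finsupp.degree_eq_weight_one]
    rfl

namespace GradedMinimalFreeResolution

variable (F : GradedMinimalFreeResolution n K)

theorem isGraded : F.toMFR.IsGraded (fun d i => (F.deg d i : ℤ)) fun j =>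
    (gradedPart (Fin n) K j).map ((Submodule.mkQ (cycleIdeal n K)).restrictScalars K) where
  φ_mem d i := by
    refine mem_freeGradedPart.2 fun l => ?_
    rcases F.hom_phi d i l with h | ⟨k, hk, h⟩
    · exact h ▸ zero_mem _
    · exact mem_gradedPart_of_mem_homogeneousSubmodule h (by rw [hk]; push_cast; ring)
  ε_mem i := by
    obtain ⟨p, hp, hpi⟩ := F.hom_eps i
    exact ⟨p, mem_gradedPart_of_mem_homogeneousSubmodule hp rfl, hpi⟩
  monomial_smul_mem a := by
    rintro ⟨p, hp, rfl⟩
    exact ⟨monomial a 1 * p, monomial_mul_mem_gradedPart hp a, rfl⟩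

variable [NeZero n]

theorem deg_mem (hn : 4 ≤ n) {d : ℕ} (i : Fin (F.toMFR.b d)) :
    (d = 0 ∧ F.deg d i = 0) ∨ (d = n - 2 ∧ F.deg d i = n) ∨
      (1 ≤ d ∧ d ≤ n - 3 ∧ F.deg d i = d + 1) := by
  obtain ⟨σ, hσ, hcyclic⟩ :=
    F.isGraded.exists_not_isAcyclicAt (isStanleyReisnerIdeal_cycleIdeal n K) d i
  rw [← Nat.cast_inj.1 hσ]
  exact not_imp_comm.1 (isAcyclicAt_cycleFaces hn) hcyclic

theorem b_sub_two (hn : 4 ≤ n) : F.toMFR.b (n - 2) = 1 :=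
  (F.toMFR.finrank_koszulHomology (n - 2)).symm.trans
    (finrank_koszulHomology_cycle hn (isStanleyReisnerIdeal_cycleIdeal n K))

end GradedMinimalFreeResolution

end Betti

/-- For `n ≥ 4`, the graded Betti numbers `β_(d,j)` of `R/Jₙ` vanish unless
`(d,j) = (0,0)`, `(d,j) = (n-2, n)`, or `1 ≤ d ≤ n-3` and `j = d+1`;
moreover `β_(n-2,n) = 1`. -/
theorem graded_betti_cycle (K : Type) [Field K] (n : ℕ) (hn : 4 ≤ n)
    (F : GradedMinimalFreeResolution n K) :
    (∀ d j : ℕ,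
      ¬ ((d = 0 ∧ j = 0) ∨ (d = n - 2 ∧ j = n) ∨ (1 ≤ d ∧ d ≤ n - 3 ∧ j = d + 1)) →
        Nat.card {i : Fin (F.toMFR.b d) // F.deg d i = j} = 0) ∧
    Nat.card {i : Fin (F.toMFR.b (n - 2)) // F.deg (n - 2) i = n} = 1 := by
  have : NeZero n := ⟨by omega⟩
  refine ⟨fun d j h => ?vanishing, ?top⟩
  case vanishing =>
    have : IsEmpty {i : Fin (F.toMFR.b d) // F.deg d i = j} :=
      ⟨fun ⟨i, hi⟩ => h (hi ▸ F.deg_mem hn i)⟩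
    exact Nat.card_of_isEmpty
  case top =>
    have hdeg (i : Fin (F.toMFR.b (n - 2))) : F.deg (n - 2) i = n := by
      have := F.deg_mem hn i
      omega
    rw [Nat.card_congr (Equiv.subtypeUnivEquiv hdeg), Nat.card_fin, F.b_sub_two hn]
end
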